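/- arXiv:1907.10563 — 2 statements merged into one kernel-verified Lean document; each statement's English description precedes it below -/
import Mathlib

section
/- Let 0 < p < ∞ and let ω be a radial weight such that ω̃ is a weight. Then there exists a constant C ≥ 1 such that C^{-1}‖f‖_{A^p_{ω̃}} ≤ ‖f‖_{A^p_ω} ≤ C‖f‖_{A^p_{ω̃}} for all analytic f on 𝔻, if and only if ω ∈ D = D̂ ∩ Ď. -/
/-!
The weight is first replaced by a Borel representative on `[0,1)` (`NiceWeight`); this changes
neither the tails nor the norms.

*Sufficiency.* The circular means `M_p^p(r,f)` of `|f|^p` increase with `r`: Jensen's formula gives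
the sub-mean value property of `log |f|`, convexity of `exp` transfers it to `|f|^p`, and a maximum
principle for the rotation average gives monotonicity (`circleAverage_norm_rpow_mono`). In polar
coordinates the norms are integrals of these means against `r ω(r)` and `r ω̃(r)`, so by the layer
cake formula (`radialInt_le`) it is enough to compare the tails `∫_a^1 s ω(s) ds` and
`∫_a^1 s ω̃(s) ds`. The condition `D̂` bounds `ω̂(a)` by a multiple of either tail. The condition `Ď`
bounds `∫_a^1 ω̃` by a multiple of `ω̂(a)`: the map `s ↦ 1 - (1-s)/K` preserves `ds/(1-s)` while `ω̂`
drops by the factor `C` along it, so that `C ∫_{1-(1-a)/K}^1 ω̃ ≤ ∫_a^1 ω̃`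
(`assoc_le_tail_of_dcheck`). The comparison is two-sided, so both norms are infinite for the same
functions `f`; there both Bochner integrals take the value `0`.

*Necessity.* On the monomials `z^n` the hypothesis says that the moments
`m_n = ∫ r^{np+1} ω` and `T_n = ∫ r^{np+1} ω̃` are comparable. Since
`1 - r^p ≤ max(1,p) (1-r)` and `∫ r^y ω̂ = (y+1)⁻¹ ∫ r^{y+1} ω`, one has
`T_n - T_{n+1} ≲ m_n / n ≲ T_n / n`, hence `T_n ≤ A^b T_{An}` with a fixed power `b`
(`poly_decay`), and `m_n ≲ A^b m_{An}`. For `n ≈ 1/(1-r)` and a large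
fixed `A`, the comparison `m_{An} ≲ m_{2An}` makes the part of `m_{An}` over `[0, (1+r)/2]`
negligible, which gives `m_n ≲ m_{An} ≲ ω̂((1+r)/2)` (`exists_mom_le_tail`). As
`ω̂(r) ≲ m_n`, this is `D̂`. Finally `log K · ω̂(1-(1-r)/K) ≲ T_n ≲ m_n ≲ ω̂(r)`, which is `Ď` for
`K` large (`dhat_dcheck_of_mom`).
-/


open MeasureTheory Set

/-- Tail integral `ω̂(r) = ∫_r^1 ω(s) ds`. -/
noncomputable def tailInt (ω : ℝ → ℝ) (r : ℝ) : ℝ := ∫ s in r..1, ω s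

/-- A radial weight: nonnegative, integrable on `[0,1)`, with positive tails. -/
def RadialWeight (ω : ℝ → ℝ) : Prop :=
  (∀ r ∈ Set.Ico (0:ℝ) 1, 0 ≤ ω r) ∧ MeasureTheory.IntegrableOn ω (Set.Ico 0 1) ∧
    ∀ r ∈ Set.Ico (0:ℝ) 1, 0 < tailInt ω r

/-- The class `D̂` of upper doubling weights. -/
def Dhat (ω : ℝ → ℝ) : Prop :=
  ∃ C : ℝ, 1 ≤ C ∧ ∀ r ∈ Set.Ico (0:ℝ) 1, tailInt ω r ≤ C * tailInt ω ((1 + r) / 2)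

/-- The class `Ď`. -/
def Dcheck (ω : ℝ → ℝ) : Prop :=
  ∃ K C : ℝ, 1 < K ∧ 1 < C ∧ ∀ r ∈ Set.Ico (0:ℝ) 1,
    C * tailInt ω (1 - (1 - r) / K) ≤ tailInt ω r

/-- The associated weight `ω̃(r) = ω̂(r)/(1-r)`. -/
noncomputable def assocW (ω : ℝ → ℝ) (r : ℝ) : ℝ := tailInt ω r / (1 - r)

/-- `‖f‖_{A^p_ω}^p = ∫_𝔻 |f|^p ω dA`, with `dA` the normalized area measure. -/
noncomputable def ApNorm (p : ℝ) (ω : ℝ → ℝ) (f : ℂ → ℂ) : ℝ :=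
  Real.pi⁻¹ * ∫ z in Metric.ball (0:ℂ) 1, ‖f z‖ ^ p * ω ‖z‖

/-- `‖Re f‖_{L^p_ω}^p = ∫_𝔻 |Re f|^p ω dA`. -/
noncomputable def LpReNorm (p : ℝ) (ω : ℝ → ℝ) (f : ℂ → ℂ) : ℝ :=
  Real.pi⁻¹ * ∫ z in Metric.ball (0:ℂ) 1, |(f z).re| ^ p * ω ‖z‖

/-- `M_p^p(s, Re f)`, the `p`-th power of the `p`-mean of `Re f` on the circle of radius `s`. -/
noncomputable def Mpp (p : ℝ) (f : ℂ → ℂ) (s : ℝ) : ℝ :=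
  (2 * Real.pi)⁻¹ * ∫ θ in (0:ℝ)..(2 * Real.pi),
    |(f ((s : ℂ) * Complex.exp ((θ : ℂ) * Complex.I))).re| ^ p

/-- `sup_{0<s<r} M_p^p(s, Re f)`. -/
noncomputable def supMpp (p : ℝ) (f : ℂ → ℂ) (r : ℝ) : ℝ :=
  sSup ((fun s => Mpp p f s) '' Set.Ioo (0:ℝ) r)

open Real Metric Filter

/-! ### Subharmonicity of `|f|^p` and monotone circular means -/

/-- Sub-mean value property of `log |f|`: in Jensen's formula the zeros of `f` contribute a
nonnegative sum. -/
lemma log_norm_le_circleAverage {f : ℂ → ℂ} {c : ℂ} {R : ℝ} (hR : 0 < R)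
    (hf : AnalyticOnNhd ℂ f (closedBall c R)) (hc : f c ≠ 0) :
    Real.log ‖f c‖ ≤ circleAverage (fun z => Real.log ‖f z‖) c R := by
  have hf' : AnalyticOnNhd ℂ f (closedBall c |R|) := by rwa [abs_of_pos hR]
  rw [hf'.circleAverage_log_norm hR.ne' hc]
  refine le_add_of_nonneg_left (finsum_nonneg fun u => ?_)
  by_cases h : u ∈ closedBall c |R|
  · refine mul_nonneg (mod_cast MeromorphicOn.AnalyticOnNhd.divisor_nonneg hf' _) ?_
    rw [mem_closedBall, abs_of_pos hR, dist_eq_norm, norm_sub_rev] at h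
    rcases (norm_nonneg (c - u)).eq_or_lt with h0 | h0
    · simp [← h0]
    · apply Real.log_nonneg
      rw [← div_eq_mul_inv, one_le_div h0]; exact h
  · simp [h]

/-- Sub-mean value property of `|f|^p`, obtained by integrating the tangent-line bound
`|f|^p ≥ a^p (1 + p (log |f| - log a))`, `a = |f(c)|`, and using the property of `log |f|`. -/
lemma norm_rpow_le_circleAverage {f : ℂ → ℂ} {c : ℂ} {R p : ℝ} (hR : 0 < R) (hp : 0 < p)
    (hf : AnalyticOnNhd ℂ f (closedBall c R)) :
    ‖f c‖ ^ p ≤ circleAverage (fun z => ‖f z‖ ^ p) c R := by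
  have hsph : sphere c |R| ⊆ closedBall c R := by rw [abs_of_pos hR]; exact sphere_subset_closedBall
  have hcont : ContinuousOn (fun z => ‖f z‖ ^ p) (sphere c |R|) :=
    ((hf.continuousOn.mono hsph).norm).rpow_const fun _ _ => Or.inr hp.le
  have hint2 : CircleIntegrable (fun z => ‖f z‖ ^ p) c R := by
    apply ContinuousOn.circleIntegrable'; exact hcont
  by_cases hc : f c = 0
  · rw [hc, norm_zero, zero_rpow hp.ne']
    exact circleAverage_nonneg_of_nonneg fun x _ => by positivity
  have ha : 0 < ‖f c‖ := norm_pos_iff.2 hc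
  set a := ‖f c‖ with hadef
  have hlogint : CircleIntegrable (fun z => Real.log ‖f z‖) c R :=
    (hf.mono hsph).meromorphicOn.circleIntegrable_log_norm
  have hcod : ∀ᶠ z in codiscreteWithin (sphere c |R|), f z ≠ 0 := by
    apply codiscreteWithin_mono hsph
    have := hf.preimage_zero_mem_codiscreteWithin hc (mem_closedBall_self hR.le)
      (isConnected_closedBall hR.le)
    filter_upwards [this] with z hz
    simpa using hz
  -- the tangent line to `exp` at `p * log a`
  set L : ℂ → ℝ := (fun _ => a ^ p * (1 - p * Real.log a)) + (a ^ p * p) • fun z => Real.log ‖f z‖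
    with hL
  have hLint : CircleIntegrable L c R := by
    rw [hL]
    exact (circleIntegrable_const _ _ _).add (hlogint.const_smul)
  have hLle : ∀ z, f z ≠ 0 → L z ≤ ‖f z‖ ^ p := by
    intro z hz
    have hz' : 0 < ‖f z‖ := norm_pos_iff.2 hz
    have := Real.add_one_le_exp (p * Real.log ‖f z‖ - p * Real.log a)
    rw [Real.exp_sub, mul_comm p (Real.log ‖f z‖), mul_comm p (Real.log a),
      ← Real.rpow_def_of_pos hz', ← Real.rpow_def_of_pos ha,
      le_div_iff₀ (Real.rpow_pos_of_pos ha p)] at this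
    simp only [hL, Pi.add_apply, Pi.smul_apply, smul_eq_mul]
    linarith
  have h1 : circleAverage L c R ≤ circleAverage (fun z => ‖f z‖ ^ p) c R := by
    have h2 : circleAverage (fun z => ‖f z‖ ^ p) c R
        = circleAverage (fun z => if f z = 0 then L z else ‖f z‖ ^ p) c R := by
      apply circleAverage_congr_codiscreteWithin _ hR.ne'
      filter_upwards [hcod] with z hz
      simp [hz]
    rw [h2]
    refine circleAverage_mono hLint ?_ fun z _ => ?_
    · refine hint2.congr_codiscreteWithin ?_
      filter_upwards [hcod] with z hz
      simp [hz]
    · split_ifs with h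
      · exact le_rfl
      · exact hLle z h
  have h3 : circleAverage L c R
      = a ^ p * (1 - p * Real.log a) + (a ^ p * p) * circleAverage (fun z => Real.log ‖f z‖) c R := by
    rw [hL, circleAverage_add (circleIntegrable_const _ _ _) hlogint.const_smul,
      circleAverage_const, circleAverage_smul]; rfl
  have h4 := log_norm_le_circleAverage hR hf hc
  have h5 : 0 < a ^ p * p := by positivity
  have h6 := mul_le_mul_of_nonneg_left h4 h5.le
  rw [← hadef] at h6
  linarith [h6, h1, h3]

/-- Circle averages of a continuous function with the sub-mean value property increase with the
radius. The rotation average `z ↦ A |z|` of `u` again has the sub-mean value property; applied on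
the circle of radius `R - ρ` about the point `ρ`, where `ρ` is the largest radius at which `A`
is maximal, it forces `ρ = R`. -/
lemma circleAverage_mono_radius {u : ℂ → ℝ} (hu : Continuous u) {R : ℝ}
    (hsub : ∀ z : ℂ, ∀ ε : ℝ, 0 < ε → ‖z‖ + ε ≤ R → u z ≤ circleAverage u z ε)
    {r : ℝ} (hr : 0 ≤ r) (hrR : r ≤ R) : circleAverage u 0 r ≤ circleAverage u 0 R := by
  set A : ℝ → ℝ := circleAverage u 0 with hA
  have hAc : Continuous A := hu.circleAverage
  have hne : (Icc 0 R).Nonempty := ⟨r, hr, hrR⟩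
  obtain ⟨ρ₀, hρ₀, hmax⟩ := isCompact_Icc.exists_isMaxOn hne hAc.continuousOn
  -- the largest radius at which the maximum is attained
  have hScl : IsCompact (Icc 0 R ∩ A ⁻¹' {A ρ₀}) :=
    isCompact_Icc.inter_right (isClosed_singleton.preimage hAc)
  obtain ⟨ρ, ⟨hρI, hρA⟩, hρmax⟩ := hScl.exists_isGreatest ⟨ρ₀, hρ₀, rfl⟩
  have hρA : A ρ = A ρ₀ := hρA
  have hle : ∀ s ∈ Icc 0 R, A s ≤ A ρ := fun s hs => hρA ▸ hmax hs
  suffices h : ρ = R by rw [← h]; exact hle r ⟨hr, hrR⟩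
  by_contra hne'
  have hlt : ρ < R := lt_of_le_of_ne hρI.2 hne'
  set ε := R - ρ with hε
  have hε0 : 0 < ε := sub_pos.2 hlt
  have h2pi : 0 < 2 * π := by positivity
  -- averaging over the circle of radius `‖z‖` is averaging over the rotations of `z`
  have hrot : ∀ z : ℂ, A ‖z‖ = (2 * π)⁻¹ • ∫ θ in 0..2 * π, u (z * Complex.exp (θ * Complex.I)) := by
    intro z
    rw [hA, circleAverage_eq_integral_add z.arg]
    congr 2
    ext θ
    congr 1
    rw [circleMap_zero]
    push_cast
    rw [add_mul, Complex.exp_add, mul_comm (Complex.exp _), ← mul_assoc,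
      Complex.norm_mul_exp_arg_mul_I]
  have hmean : ∀ θ : ℝ, u (circleMap 0 ρ θ) ≤ (2 * π)⁻¹ *
      ∫ φ in 0..2 * π, u ((ρ + ε * Complex.exp (φ * Complex.I)) * Complex.exp (θ * Complex.I)) := by
    intro θ
    have h1 : ‖circleMap 0 ρ θ‖ + ε ≤ R := by
      rw [norm_circleMap_zero, abs_of_nonneg hρI.1]; simp [hε]
    have h2 := hsub _ ε hε0 h1
    rw [circleAverage_eq_integral_add θ] at h2
    refine h2.trans (le_of_eq ?_)
    rw [smul_eq_mul]
    congr 2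
    ext φ
    congr 1
    rw [circleMap, circleMap_zero]
    push_cast
    rw [add_mul, Complex.exp_add]
    ring
  have hjc : Continuous (Function.uncurry fun θ φ : ℝ =>
      u ((ρ + ε * Complex.exp (φ * Complex.I)) * Complex.exp (θ * Complex.I))) := by
    apply hu.comp
    fun_prop
  have hkey : A ρ ≤ (2 * π)⁻¹ * ∫ φ in 0..2 * π, A ‖(ρ + ε * Complex.exp (φ * Complex.I))‖ := by
    calc A ρ = (2 * π)⁻¹ * ∫ θ in 0..2 * π, u (circleMap 0 ρ θ) := rfl
      _ ≤ (2 * π)⁻¹ * ∫ θ in 0..2 * π, (2 * π)⁻¹ *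
          ∫ φ in 0..2 * π, u ((ρ + ε * Complex.exp (φ * Complex.I)) * Complex.exp (θ * Complex.I)) := by
          gcongr
          apply intervalIntegral.integral_mono_on h2pi.le
          · apply Continuous.intervalIntegrable; fun_prop
          · apply Continuous.intervalIntegrable
            apply Continuous.mul continuous_const
            exact intervalIntegral.continuous_parametric_intervalIntegral_of_continuous' hjc _ _
          · intro θ _; exact hmean θ
      _ = _ := by
          congr 1
          simp_rw [hrot]
          rw [intervalIntegral.integral_const_mul]
          simp_rw [smul_eq_mul]
          rw [intervalIntegral.integral_const_mul]
          congr 1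
          apply intervalIntegral_intervalIntegral_swap
          exact (hjc.continuousOn.integrableOn_compact
            (isCompact_uIcc.prod isCompact_uIcc)).mono_set
            (Set.prod_mono uIoc_subset_uIcc uIoc_subset_uIcc)
  have hnorm : ∀ φ : ℝ, ‖(ρ + ε * Complex.exp (φ * Complex.I))‖ ∈ Icc 0 R := by
    intro φ
    refine ⟨norm_nonneg _, (norm_add_le _ _).trans ?_⟩
    rw [norm_mul, Complex.norm_exp_ofReal_mul_I, Complex.norm_real, Complex.norm_real,
      norm_of_nonneg hρI.1, norm_of_nonneg hε0.le]
    simp [hε]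
  have hstrict : ∫ φ in 0..2 * π, A ‖(ρ + ε * Complex.exp (φ * Complex.I))‖
      < ∫ φ in (0:ℝ)..2 * π, A ρ := by
    apply intervalIntegral.integral_lt_integral_of_continuousOn_of_le_of_exists_lt h2pi
    · apply Continuous.continuousOn
      apply hAc.comp; fun_prop
    · exact continuousOn_const
    · intro φ _; exact hle _ (hnorm φ)
    · refine ⟨0, ⟨le_rfl, h2pi.le⟩, ?_⟩
      have h0 : ‖((ρ:ℂ) + ε * Complex.exp ((0:ℝ) * Complex.I))‖ = R := by
        simp only [Complex.ofReal_zero, zero_mul, Complex.exp_zero, mul_one]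
        rw [← Complex.ofReal_add, Complex.norm_real, norm_of_nonneg (by linarith [hρI.1])]
        simp [hε]
      rw [h0]
      refine lt_of_le_of_ne (hle R ⟨hr.trans hrR, le_rfl⟩) fun h => ?_
      exact absurd (hρmax ⟨⟨hr.trans hrR, le_rfl⟩, h.trans hρA⟩) (not_le.2 hlt)
  rw [intervalIntegral.integral_const, sub_zero, smul_eq_mul] at hstrict
  have := mul_lt_mul_of_pos_left hstrict (inv_pos.2 h2pi)
  rw [← mul_assoc, inv_mul_cancel₀ h2pi.ne', one_mul] at this
  linarith

/-- Hardy's convexity theorem, monotonicity part: the circular means of `|f|^p` increase. -/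
lemma circleAverage_norm_rpow_mono {f : ℂ → ℂ} (hf : DifferentiableOn ℂ f (ball 0 1)) {p : ℝ}
    (hp : 0 < p) {r R : ℝ} (hr : 0 ≤ r) (hrR : r ≤ R) (hR : R < 1) :
    circleAverage (fun z => ‖f z‖ ^ p) 0 r ≤ circleAverage (fun z => ‖f z‖ ^ p) 0 R := by
  rcases (hr.trans hrR).eq_or_lt with h0 | h0
  · have : r = R := le_antisymm hrR (h0 ▸ hr)
    rw [this]
  -- radial retraction onto the closed disc of radius `R` makes the function globally continuous
  set h : ℂ → ℂ := fun z => ((R / max R ‖z‖ : ℝ) : ℂ) * z with hh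
  have hmaxpos : ∀ z : ℂ, 0 < max R ‖z‖ := fun z => lt_max_of_lt_left h0
  have hcont : Continuous h := by
    have : Continuous fun z : ℂ => R / max R ‖z‖ :=
      continuous_const.div (by fun_prop) fun z => (hmaxpos z).ne'
    rw [hh]; fun_prop
  have hid : ∀ z ∈ closedBall (0:ℂ) R, h z = z := by
    intro z hz
    rw [mem_closedBall_zero_iff] at hz
    simp only [hh]
    rw [max_eq_left hz, div_self h0.ne', Complex.ofReal_one, one_mul]
  have hmem : ∀ z, h z ∈ ball (0:ℂ) 1 := by
    intro z
    rw [mem_ball_zero_iff, hh]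
    simp only [norm_mul, Complex.norm_real]
    rw [norm_of_nonneg (by have := hmaxpos z; positivity), div_mul_eq_mul_div, div_lt_one (hmaxpos z)]
    rcases le_or_gt ‖z‖ R with h1 | h1
    · rw [max_eq_left h1]; nlinarith [norm_nonneg z]
    · rw [max_eq_right h1.le]; nlinarith [norm_nonneg z]
  set u : ℂ → ℝ := fun z => ‖f (h z)‖ ^ p with hu
  have huc : Continuous u := by
    have : Continuous fun z => f (h z) := hf.continuousOn.comp_continuous hcont hmem
    exact this.norm.rpow_const fun _ => Or.inr hp.le
  have huf : ∀ z ∈ closedBall (0:ℂ) R, u z = ‖f z‖ ^ p := fun z hz => by simp only [hu, hid z hz]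
  have hcongr : ∀ s, 0 ≤ s → s ≤ R →
      circleAverage (fun z => ‖f z‖ ^ p) 0 s = circleAverage u 0 s := by
    intro s hs hsR
    apply circleAverage_congr_sphere
    intro z hz
    refine (huf z ?_).symm
    rw [abs_of_nonneg hs, mem_sphere_zero_iff_norm] at hz
    rw [mem_closedBall_zero_iff, hz]; exact hsR
  rw [hcongr r hr hrR, hcongr R h0.le le_rfl]
  refine circleAverage_mono_radius huc (fun z ε hε hz => ?_) hr hrR
  have hsubset : closedBall z ε ⊆ closedBall 0 R := by
    apply closedBall_subset_closedBall'
    rw [dist_zero_right]; linarith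
  have han : AnalyticOnNhd ℂ f (closedBall z ε) :=
    (hf.analyticOnNhd isOpen_ball).mono (hsubset.trans (closedBall_subset_ball hR))
  rw [huf z (hsubset (mem_closedBall_self hε.le))]
  refine (norm_rpow_le_circleAverage hε hp han).trans (le_of_eq ?_)
  apply circleAverage_congr_sphere
  intro w hw
  rw [abs_of_pos hε] at hw
  exact (huf w (hsubset (sphere_subset_closedBall hw))).symm

/-! ### Tails and moments -/

/-- A Borel representative of a radial weight, defined and integrable on the whole line, whose
associated function is integrable on `[0,1]`. -/
structure NiceWeight (W : ℝ → ℝ) : Prop where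
  meas : Measurable W
  nonneg : ∀ r, 0 ≤ W r
  int : Integrable W
  pos : ∀ r ∈ Ico (0:ℝ) 1, 0 < tailInt W r
  tint : IntervalIntegrable (assocW W) volume 0 1

namespace NiceWeight

variable {W : ℝ → ℝ}

lemma ii (h : NiceWeight W) (a b : ℝ) : IntervalIntegrable W volume a b :=
  h.int.intervalIntegrable

lemma tail_sub (h : NiceWeight W) (a b : ℝ) : tailInt W a - tailInt W b = ∫ s in a..b, W s := by
  unfold tailInt
  rw [← intervalIntegral.integral_add_adjacent_intervals (h.ii a b) (h.ii b 1)]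
  ring

lemma tail_anti (h : NiceWeight W) : Antitone (tailInt W) := by
  intro a b hab
  have := intervalIntegral.integral_nonneg (μ := volume) hab fun u _ => h.nonneg u
  linarith [h.tail_sub a b]

lemma tail_one : tailInt W 1 = 0 := by simp [tailInt]

lemma tail_nonneg (h : NiceWeight W) {r : ℝ} (hr : r ≤ 1) : 0 ≤ tailInt W r :=
  tail_one (W := W) ▸ h.tail_anti hr

lemma tail_cont (h : NiceWeight W) : Continuous (tailInt W) := by
  have h1 : Continuous fun r => ∫ s in (1:ℝ)..r, W s :=
    intervalIntegral.continuous_primitive (fun a b => h.ii a b) 1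
  have : tailInt W = fun r => - ∫ s in (1:ℝ)..r, W s := by
    ext r; rw [tailInt, intervalIntegral.integral_symm]
  rw [this]; exact h1.neg

lemma assoc_nonneg (h : NiceWeight W) {r : ℝ} (hr : r ≤ 1) : 0 ≤ assocW W r :=
  div_nonneg (h.tail_nonneg hr) (by linarith)

lemma assoc_meas (h : NiceWeight W) : Measurable (assocW W) :=
  h.tail_cont.measurable.div (by fun_prop)

lemma tint' (h : NiceWeight W) {a b : ℝ} (ha : a ∈ Icc (0:ℝ) 1) (hb : b ∈ Icc (0:ℝ) 1) :
    IntervalIntegrable (assocW W) volume a b :=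
  h.tint.mono_set (by
    rw [uIcc_of_le zero_le_one]; exact uIcc_subset_Icc ha hb)

end NiceWeight

/-- The moment `∫_0^1 r^y w(r) dr`. -/
noncomputable def mom (w : ℝ → ℝ) (y : ℝ) : ℝ := ∫ r in (0:ℝ)..1, r ^ y * w r

lemma ii_rpow_mul {w : ℝ → ℝ} {a b y : ℝ} (hy : 0 ≤ y) (hw : IntervalIntegrable w volume a b) :
    IntervalIntegrable (fun r => r ^ y * w r) volume a b :=
  hw.continuousOn_mul (Real.continuous_rpow_const hy).continuousOn

namespace NiceWeight

variable {W : ℝ → ℝ}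

/-- Tonelli: `∫_0^1 r^y ω̂(r) dr = (y+1)⁻¹ ∫_0^1 s^{y+1} ω(s) ds`. -/
lemma mom_tail_eq (h : NiceWeight W) {y : ℝ} (hy : 0 ≤ y) :
    mom (tailInt W) y = (y + 1)⁻¹ * mom W (y + 1) := by
  set μ := volume.restrict (Ioc (0:ℝ) 1) with hμ
  set F : ℝ → ℝ → ℝ := fun r s => {q : ℝ × ℝ | q.1 < q.2}.indicator
    (fun q => q.1 ^ y * W q.2) (r, s) with hF
  have hint : Integrable (Function.uncurry F) (μ.prod μ) := by
    have h1 : Integrable (fun q : ℝ × ℝ => q.1 ^ y * W q.2) (μ.prod μ) := by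
      apply Integrable.mul_prod (f := fun r : ℝ => r ^ y) (g := W)
      · exact ((Real.continuous_rpow_const hy).integrableOn_Icc (a := 0) (b := 1)).mono_set
          Ioc_subset_Icc_self
      · exact h.int.integrableOn
    exact h1.indicator (measurableSet_lt measurable_fst measurable_snd)
  have hswap := integral_integral_swap hint
  have hl : ∫ r, ∫ s, F r s ∂μ ∂μ = mom (tailInt W) y := by
    rw [mom, intervalIntegral.integral_of_le zero_le_one]
    apply setIntegral_congr_fun measurableSet_Ioc
    intro r hr
    have : ∀ s, F r s = (Ioi r).indicator (fun s => r ^ y * W s) s := by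
      intro s; simp only [hF, indicator]; rfl
    simp only [this]
    rw [integral_indicator measurableSet_Ioi, hμ, Measure.restrict_restrict measurableSet_Ioi,
      integral_const_mul, tailInt, intervalIntegral.integral_of_le hr.2]
    congr 2
    congr 1
    ext s; simp only [mem_inter_iff, mem_Ioi, mem_Ioc]
    constructor
    · rintro ⟨h1, h2⟩; exact ⟨h1, h2.2⟩
    · rintro ⟨h1, h2⟩; exact ⟨h1, hr.1.trans h1, h2⟩
  have hr : ∫ s, ∫ r, F r s ∂μ ∂μ = (y + 1)⁻¹ * mom W (y + 1) := by
    rw [mom, intervalIntegral.integral_of_le zero_le_one, ← integral_const_mul]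
    apply setIntegral_congr_fun measurableSet_Ioc
    intro s hs
    have : ∀ r, F r s = (Iio s).indicator (fun r => r ^ y * W s) r := by
      intro r; simp only [hF, indicator]; rfl
    simp only [this]
    rw [integral_indicator measurableSet_Iio, hμ, Measure.restrict_restrict measurableSet_Iio,
      integral_mul_const]
    have hset : Iio s ∩ Ioc 0 1 = Ioo 0 s := by
      ext r; simp only [mem_inter_iff, mem_Iio, mem_Ioc, mem_Ioo]
      constructor
      · rintro ⟨h1, h2⟩; exact ⟨h2.1, h1⟩
      · rintro ⟨h1, h2⟩; exact ⟨h2, h1, (h2.trans_le hs.2).le⟩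
    rw [hset, ← integral_Ioc_eq_integral_Ioo, ← intervalIntegral.integral_of_le hs.1.le,
      integral_rpow (Or.inl (by linarith)), zero_rpow (by linarith)]
    field_simp
    ring
  rw [← hl, hswap, hr]

lemma mom_mono_exp {w : ℝ → ℝ} {y y' : ℝ} (hy : 0 < y) (hyy : y ≤ y')
    (hw : IntervalIntegrable w volume 0 1) (hn : ∀ r ≤ 1, 0 ≤ w r) : mom w y' ≤ mom w y := by
  apply intervalIntegral.integral_mono_on zero_le_one (ii_rpow_mul (by linarith) hw)
    (ii_rpow_mul hy.le hw)
  intro r hr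
  rcases hr.1.eq_or_lt with h0 | h0
  · rw [← h0, zero_rpow (by linarith), zero_rpow (by linarith)]
  · exact mul_le_mul_of_nonneg_right (Real.rpow_le_rpow_of_exponent_ge h0 hr.2 hyy) (hn r hr.2)

lemma one_sub_rpow_le {p r : ℝ} (hr0 : 0 ≤ r) (hr1 : r ≤ 1) :
    1 - r ^ p ≤ max 1 p * (1 - r) := by
  have h1r : 0 ≤ 1 - r := by linarith
  rcases le_total p 1 with h | h
  · have : r ≤ r ^ p := by
      rcases hr0.eq_or_lt with h0 | h0
      · rw [← h0]; positivity
      · simpa using Real.rpow_le_rpow_of_exponent_ge h0 hr1 h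
    rw [max_eq_left h]; linarith
  · have := one_add_mul_self_le_rpow_one_add (s := r - 1) (by linarith) h
    rw [max_eq_right h]
    rw [add_sub_cancel] at this
    linarith

/-- One step in the exponent costs at most `O(1/y)` of the `ω`-moment. -/
lemma mom_assoc_step (h : NiceWeight W) {p y : ℝ} (hp : 0 < p) (hy : 0 < y) :
    mom (assocW W) y - mom (assocW W) (y + p) ≤ max 1 p / (y + 1) * mom W y := by
  have h1 : mom (assocW W) y - mom (assocW W) (y + p) ≤ max 1 p * mom (tailInt W) y := by
    unfold mom
    rw [← intervalIntegral.integral_sub (ii_rpow_mul hy.le h.tint)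
      (ii_rpow_mul (by linarith) h.tint), ← intervalIntegral.integral_const_mul]
    apply intervalIntegral.integral_mono_on zero_le_one
    · exact (ii_rpow_mul hy.le h.tint).sub (ii_rpow_mul (by linarith) h.tint)
    · exact (ii_rpow_mul hy.le (h.tail_cont.intervalIntegrable 0 1)).const_mul _
    · intro r hr
      rw [Real.rpow_add_of_nonneg hr.1 hy.le hp.le]
      have hr' := one_sub_rpow_le (p := p) hr.1 hr.2
      have ht := h.tail_nonneg hr.2
      have hry := Real.rpow_nonneg hr.1 y
      rcases hr.2.eq_or_lt with h1 | h1
      · subst h1; simp [tail_one, assocW]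
      · have h2 : 0 < 1 - r := by linarith
        have : assocW W r * (1 - r) = tailInt W r := by rw [assocW]; field_simp
        rw [← this]
        have ha := h.assoc_nonneg hr.2
        have := mul_le_mul_of_nonneg_left hr' (mul_nonneg hry ha)
        nlinarith
  refine h1.trans ?_
  rw [h.mom_tail_eq hy.le, div_eq_mul_inv, mul_assoc]
  have := mom_mono_exp (y := y) (y' := y + 1) hy (by linarith) (h.ii 0 1) (fun r _ => h.nonneg r)
  gcongr

lemma exp_le_of_half {r : ℝ} (hr : 1 / 2 ≤ r) (hr1 : r ≤ 1) : exp (-(2 * (1 - r))) ≤ r := by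
  have h0 : 0 < r := by linarith
  rw [← Real.le_log_iff_exp_le h0]
  have := Real.one_sub_inv_le_log_of_pos h0
  refine le_trans ?_ this
  have : r⁻¹ ≤ 2 := by rw [inv_le_comm₀ h0 two_pos]; linarith
  have h3 : r * r⁻¹ = 1 := mul_inv_cancel₀ h0.ne'
  nlinarith

lemma one_le_exp_mul_rpow {r s y : ℝ} (hr : 1 / 2 ≤ r) (hs : r ≤ s) (hs1 : s ≤ 1) (hy : 0 ≤ y) :
    1 ≤ exp (2 * (1 - r) * y) * s ^ y := by
  have h1 := exp_le_of_half hr (hs.trans hs1)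
  have h2 : exp (-(2 * (1 - r))) ^ y ≤ s ^ y :=
    Real.rpow_le_rpow (exp_pos _).le (h1.trans hs) hy
  rw [← Real.exp_mul] at h2
  calc (1:ℝ) = exp (2 * (1 - r) * y) * exp (-(2 * (1 - r)) * y) := by
        rw [← Real.exp_add]; simp
    _ ≤ _ := by gcongr

/-- On `[r,1]` the factor `s^y` is at least `exp (-2(1-r)y)`, hence bounded below when
`y ≲ 1/(1-r)`. -/
lemma tail_le_mom (h : NiceWeight W) {r y : ℝ} (hr : 1 / 2 ≤ r) (hr1 : r ≤ 1) (hy : 0 ≤ y) :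
    tailInt W r ≤ exp (2 * (1 - r) * y) * mom W y := by
  have h1 : ∫ s in r..1, s ^ y * W s ≤ mom W y := by
    unfold mom
    rw [← intervalIntegral.integral_add_adjacent_intervals
      (ii_rpow_mul hy (h.ii 0 r)) (ii_rpow_mul hy (h.ii r 1))]
    have : 0 ≤ ∫ s in 0..r, s ^ y * W s :=
      intervalIntegral.integral_nonneg (by linarith) fun s hs =>
        mul_nonneg (Real.rpow_nonneg hs.1 y) (h.nonneg s)
    linarith
  refine le_trans ?_ (mul_le_mul_of_nonneg_left h1 (exp_pos _).le)
  rw [← intervalIntegral.integral_const_mul, tailInt]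
  apply intervalIntegral.integral_mono_on hr1 (h.ii r 1)
    ((ii_rpow_mul hy (h.ii r 1)).const_mul _)
  intro s hs
  have := mul_le_mul_of_nonneg_right (one_le_exp_mul_rpow hr hs.1 hs.2 hy) (h.nonneg s)
  linarith

/-- The moment of `ω̃` over `[r, 1-(1-r)/K]`, an interval of `ds/(1-s)`-mass `log K`, already
controls `log K` times the tail at its right endpoint. -/
lemma log_mul_tail_le_mom (h : NiceWeight W) {r y K : ℝ} (hr : 1 / 2 ≤ r) (hr1 : r < 1)
    (hy : 0 ≤ y) (hK : 1 < K) :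
    log K * tailInt W (1 - (1 - r) / K) ≤ exp (2 * (1 - r) * y) * mom (assocW W) y := by
  set ρ := 1 - (1 - r) / K with hρ
  have h1r : 0 < 1 - r := by linarith
  have hK0 : 0 < K := by linarith
  have hρ1 : ρ < 1 := by have : 0 < (1 - r) / K := by positivity
                         linarith
  have hrρ : r ≤ ρ := by
    have : (1 - r) / K ≤ 1 - r := div_le_self h1r.le hK.le
    linarith
  have hi : ∀ a ∈ Icc (0:ℝ) 1, ∀ b ∈ Icc (0:ℝ) 1,
      IntervalIntegrable (fun s => s ^ y * assocW W s) volume a b :=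
    fun a ha b hb => ii_rpow_mul hy (h.tint' ha hb)
  have hr' : r ∈ Icc (0:ℝ) 1 := ⟨by linarith, hr1.le⟩
  have hρ' : ρ ∈ Icc (0:ℝ) 1 := ⟨by linarith, hρ1.le⟩
  have h0' : (0:ℝ) ∈ Icc (0:ℝ) 1 := by simp
  have h1' : (1:ℝ) ∈ Icc (0:ℝ) 1 := by simp
  have hnn : ∀ s, 0 ≤ s → s ≤ 1 → 0 ≤ s ^ y * assocW W s := fun s h0 h1 =>
    mul_nonneg (Real.rpow_nonneg h0 y) (h.assoc_nonneg h1)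
  have h1 : ∫ s in r..ρ, s ^ y * assocW W s ≤ mom (assocW W) y := by
    unfold mom
    rw [← intervalIntegral.integral_add_adjacent_intervals (hi 0 h0' r hr') (hi r hr' 1 h1'),
      ← intervalIntegral.integral_add_adjacent_intervals (hi r hr' ρ hρ') (hi ρ hρ' 1 h1')]
    have e1 : 0 ≤ ∫ s in 0..r, s ^ y * assocW W s :=
      intervalIntegral.integral_nonneg hr'.1 fun s hs => hnn s hs.1 (hs.2.trans hr1.le)
    have e2 : 0 ≤ ∫ s in ρ..1, s ^ y * assocW W s :=
      intervalIntegral.integral_nonneg hρ1.le fun s hs => hnn s (hρ'.1.trans hs.1) hs.2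
    linarith
  refine le_trans ?_ (mul_le_mul_of_nonneg_left h1 (exp_pos _).le)
  have hlog : ∫ s in r..ρ, (1 - s)⁻¹ = log K := by
    rw [intervalIntegral.integral_comp_sub_left (fun x => x⁻¹) 1,
      integral_inv_of_pos (by linarith) h1r]
    congr 1
    rw [hρ, sub_sub_cancel, div_div_cancel₀ h1r.ne']
  rw [← hlog, ← intervalIntegral.integral_mul_const, ← intervalIntegral.integral_const_mul]
  apply intervalIntegral.integral_mono_on hrρ
  · apply IntervalIntegrable.mul_const
    apply ContinuousOn.intervalIntegrable
    rw [uIcc_of_le hrρ]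
    apply ContinuousOn.inv₀ (by fun_prop)
    intro s hs; linarith [hs.2]
  · exact (hi r hr' ρ hρ').const_mul _
  · intro s hs
    have hs1 : 0 < 1 - s := by linarith [hs.2]
    have e1 := one_le_exp_mul_rpow hr hs.1 (hs.2.trans hρ1.le) hy
    have e2 : (1 - s)⁻¹ * tailInt W ρ ≤ assocW W s := by
      rw [assocW, div_eq_inv_mul]
      have := h.tail_anti hs.2
      gcongr
    have e3 := mul_le_mul_of_nonneg_right e1 (h.assoc_nonneg (hs.2.trans hρ1.le))
    linarith

/-- A moment that is comparable to the one with doubled exponent is controlled by a tail: on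
`[0,ρ]` doubling gains the factor `ρ^x`, so that part can be absorbed. -/
lemma mom_le_tail (h : NiceWeight W) {x ρ D : ℝ} (hx : 0 ≤ x) (hρ0 : 0 < ρ) (hρ1 : ρ < 1)
    (hD : mom W (x + 1) ≤ D * mom W (2 * x + 1)) (hD0 : 0 ≤ D) (hDρ : D * ρ ^ x ≤ 1 / 2) :
    mom W (x + 1) ≤ 2 * D * tailInt W ρ := by
  have hi : ∀ a b, IntervalIntegrable (fun s => s ^ (x + 1) * W s) volume a b := fun a b =>
    ii_rpow_mul (by linarith) (h.ii a b)
  have hi2 : ∀ a b, IntervalIntegrable (fun s => s ^ (2 * x + 1) * W s) volume a b := fun a b =>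
    ii_rpow_mul (by linarith) (h.ii a b)
  have hnn : ∀ s, 0 ≤ s → 0 ≤ s ^ (x + 1) * W s := fun s h0 =>
    mul_nonneg (Real.rpow_nonneg h0 _) (h.nonneg s)
  have key : mom W (2 * x + 1) ≤ ρ ^ x * mom W (x + 1) + tailInt W ρ := by
    have e0 : ρ ^ x * mom W (x + 1) ≥ ρ ^ x * ∫ s in 0..ρ, s ^ (x + 1) * W s := by
      unfold mom
      rw [← intervalIntegral.integral_add_adjacent_intervals (hi 0 ρ) (hi ρ 1)]
      have : 0 ≤ ∫ s in ρ..1, s ^ (x + 1) * W s :=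
        intervalIntegral.integral_nonneg hρ1.le fun s hs => hnn s (hρ0.le.trans hs.1)
      gcongr; linarith
    have e1 : ∫ s in 0..ρ, s ^ (2 * x + 1) * W s ≤ ρ ^ x * ∫ s in 0..ρ, s ^ (x + 1) * W s := by
      rw [← intervalIntegral.integral_const_mul]
      apply intervalIntegral.integral_mono_on hρ0.le (hi2 _ _) ((hi _ _).const_mul _)
      intro s hs
      have : s ^ (2 * x + 1) = s ^ x * s ^ (x + 1) := by
        rw [← Real.rpow_add_of_nonneg hs.1 hx (by linarith)]; congr 1; ring
      rw [this, mul_assoc]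
      exact mul_le_mul_of_nonneg_right (Real.rpow_le_rpow hs.1 hs.2 hx) (hnn s hs.1)
    have e2 : ∫ s in ρ..1, s ^ (2 * x + 1) * W s ≤ tailInt W ρ := by
      apply intervalIntegral.integral_mono_on hρ1.le (hi2 _ _) (h.ii _ _)
      intro s hs
      exact mul_le_of_le_one_left (h.nonneg s)
        (Real.rpow_le_one (hρ0.le.trans hs.1) hs.2 (by linarith))
    have e3 : mom W (2 * x + 1) = (∫ s in 0..ρ, s ^ (2 * x + 1) * W s)
        + ∫ s in ρ..1, s ^ (2 * x + 1) * W s :=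
      (intervalIntegral.integral_add_adjacent_intervals (hi2 0 ρ) (hi2 ρ 1)).symm
    linarith
  have hm0 : 0 ≤ mom W (x + 1) :=
    intervalIntegral.integral_nonneg zero_le_one fun s hs => hnn s hs.1
  have e4 := mul_le_mul_of_nonneg_left key hD0
  have e5 := mul_le_mul_of_nonneg_right hDρ hm0
  nlinarith

end NiceWeight

/-! ### From comparable moments to `D̂` and `Ď` -/

/-- If the relative decrement of `T` at `n` is `O(1/n)`, then `T` decays at most polynomially. -/
lemma poly_decay {T : ℕ → ℝ} {a p : ℝ} (hp : 0 < p) (ha : 0 ≤ a) (hT : ∀ n, 0 ≤ T n)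
    (hstep : ∀ n : ℕ, T n - T (n + 1) ≤ a / (n * p + 2) * T n) :
    ∃ b n₀ : ℕ, ∀ n ≥ n₀, ∀ A : ℕ, 1 ≤ A → T n ≤ (A:ℝ) ^ b * T (A * n) := by
  set a' := a / min p 1 with ha'
  have hmin : 0 < min p 1 := lt_min hp one_pos
  have ha'0 : 0 ≤ a' := by positivity
  obtain ⟨b, hb⟩ := exists_nat_ge (2 * a')
  refine ⟨b, b, fun n hn A hA => ?_⟩
  have hone : ∀ k ≥ b, T k * ((k:ℝ) + 1) ^ b ≤ T (k + 1) * (((k + 1 : ℕ) : ℝ) + 1) ^ b := by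
    intro k hk
    have hk1 : (0:ℝ) < (k:ℝ) + 1 := by positivity
    have hkb : (b:ℝ) ≤ k := by exact_mod_cast hk
    set x := a' / ((k:ℝ) + 1) with hx
    have hx0 : 0 ≤ x := by positivity
    have hx2 : x ≤ 1 / 2 := by rw [hx, div_le_iff₀ hk1]; linarith
    have h1 : a / (k * p + 2) ≤ x := by
      rw [hx, ha', div_div]
      gcongr
      have e1 : min p 1 * k ≤ p * k := by gcongr; exact min_le_left _ _
      have e2 : min p 1 ≤ 1 := min_le_right _ _
      nlinarith
    have h2 : T k * (1 - x) ≤ T (k + 1) := by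
      have := mul_le_mul_of_nonneg_right h1 (hT k)
      linarith [hstep k]
    have h3 : T k ≤ (1 + 2 * x) * T (k + 1) := by
      have h4 : 1 ≤ (1 + 2 * x) * (1 - x) := by nlinarith
      have := mul_le_mul_of_nonneg_left h2 (by linarith : 0 ≤ 1 + 2 * x)
      have := mul_le_mul_of_nonneg_right h4 (hT k)
      linarith
    have h5 : 1 + 2 * x ≤ (1 + 1 / ((k:ℝ) + 1)) ^ b := by
      refine le_trans ?_ (one_add_mul_le_pow (by have : 0 < 1 / ((k:ℝ) + 1) := by positivity
                                                 linarith) b)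
      rw [hx, mul_one_div, mul_div_assoc']
      gcongr
    have h6 : (1 + 1 / ((k:ℝ) + 1)) ^ b * ((k:ℝ) + 1) ^ b = (((k + 1 : ℕ) : ℝ) + 1) ^ b := by
      rw [← mul_pow]; congr 1; push_cast; field_simp
    rw [← h6]
    have h7 := h3.trans (mul_le_mul_of_nonneg_right h5 (hT (k + 1)))
    have := mul_le_mul_of_nonneg_right h7 (by positivity : 0 ≤ ((k:ℝ) + 1) ^ b)
    linarith
  have hmono : ∀ k ≥ n, T n * ((n:ℝ) + 1) ^ b ≤ T k * ((k:ℝ) + 1) ^ b := by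
    intro k hk
    induction k, hk using Nat.le_induction with
    | base => exact le_rfl
    | succ m hm ih => exact ih.trans (hone m (hn.trans hm))
  have h1 := hmono (A * n) (Nat.le_mul_of_pos_left n hA)
  have hA' : (1:ℝ) ≤ A := by exact_mod_cast hA
  have h2 : (((A * n : ℕ) : ℝ) + 1) ^ b ≤ (A:ℝ) ^ b * ((n:ℝ) + 1) ^ b := by
    rw [← mul_pow]; push_cast; gcongr; nlinarith
  have h3 := h1.trans (mul_le_mul_of_nonneg_left h2 (hT (A * n)))
  have h4 : (0:ℝ) < ((n:ℝ) + 1) ^ b := by positivity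
  refine le_of_mul_le_mul_right (h3.trans (le_of_eq ?_)) h4
  ring

namespace NiceWeight

variable {W : ℝ → ℝ}

/-- Comparable moments of `ω` and `ω̃` decay at most polynomially, hence the moment of order
`n p + 1` with `n ≈ 1/(1-r)` is controlled by the tail at `(1+r)/2`. -/
lemma exists_mom_le_tail (h : NiceWeight W) {p C : ℝ} (hp : 0 < p) (hC : 1 ≤ C)
    (h1 : ∀ n : ℕ, mom (assocW W) (n * p + 1) ≤ C * mom W (n * p + 1))
    (h2 : ∀ n : ℕ, mom W (n * p + 1) ≤ C * mom (assocW W) (n * p + 1)) :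
    ∃ E : ℝ, 1 ≤ E ∧ ∀ r : ℝ, 1 / 2 ≤ r → r < 1 → ∃ n : ℕ,
      mom W (n * p + 1) ≤ E * tailInt W ((1 + r) / 2) ∧
      exp (2 * (1 - r) * (n * p + 1)) ≤ E := by
  have hC0 : 0 ≤ C := by linarith
  have hT : ∀ n : ℕ, 0 ≤ mom (assocW W) (n * p + 1) := fun n =>
    intervalIntegral.integral_nonneg zero_le_one fun s hs =>
      mul_nonneg (Real.rpow_nonneg hs.1 _) (h.assoc_nonneg hs.2)
  obtain ⟨b, n₀, hb⟩ := poly_decay (T := fun n => mom (assocW W) (n * p + 1))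
    (a := max 1 p * C) hp (by positivity) hT (by
      intro n
      have e1 := h.mom_assoc_step (y := n * p + 1) hp (by positivity)
      have e2 : ((n + 1 : ℕ) : ℝ) * p + 1 = n * p + 1 + p := by push_cast; ring
      simp only [e2]
      refine e1.trans ?_
      have e3 := mul_le_mul_of_nonneg_left (h2 n)
        (by positivity : 0 ≤ max 1 p / (n * p + 1 + 1))
      refine e3.trans (le_of_eq ?_)
      rw [add_assoc, one_add_one_eq_two]; ring)
  have hM : ∀ n ≥ n₀, ∀ A : ℕ, 1 ≤ A →
      mom W (n * p + 1) ≤ C ^ 2 * (A:ℝ) ^ b * mom W ((A * n : ℕ) * p + 1) := by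
    intro n hn A hA
    have e1 := mul_le_mul_of_nonneg_left (hb n hn A hA) hC0
    have e2 := mul_le_mul_of_nonneg_left (h1 (A * n)) (by positivity : 0 ≤ C * (A:ℝ) ^ b)
    calc _ ≤ _ := h2 n
      _ ≤ _ := e1
      _ = C * (A:ℝ) ^ b * mom (assocW W) ((A * n : ℕ) * p + 1) := by ring
      _ ≤ _ := e2
      _ = _ := by ring
  set D : ℝ := C ^ 2 * 2 ^ b with hD
  have hD1 : 1 ≤ D := one_le_mul_of_one_le_of_one_le (one_le_pow₀ hC) (one_le_pow₀ one_le_two)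
  -- `A` makes `D * exp (-p A / 2) ≤ 1 / 2`
  obtain ⟨A₀, hA₀⟩ := exists_nat_ge (2 * log (2 * D) / p)
  set A := A₀ + 1 with hA
  have hA1 : 1 ≤ A := by omega
  have hAlog : log (2 * D) ≤ p * A / 2 := by
    have : 2 * log (2 * D) / p ≤ A := hA₀.trans (by rw [hA]; push_cast; linarith)
    rw [div_le_iff₀ hp] at this
    linarith
  refine ⟨max (C ^ 2 * (A:ℝ) ^ b * (2 * D)) (exp (2 * ((n₀ + 2) * p + 1))),
    le_max_of_le_right (Real.one_le_exp (by positivity)), fun r hr hr1 => ?_⟩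
  have h1r : 0 < 1 - r := by linarith
  set n := n₀ + ⌈1 / (1 - r)⌉₊ with hn
  have hn0 : n₀ ≤ n := by omega
  have hnlow : 1 ≤ (1 - r) * n := by
    have := Nat.le_ceil (1 / (1 - r))
    have h3 : 1 / (1 - r) ≤ n := this.trans (by rw [hn]; push_cast; linarith [n₀.cast_nonneg (α := ℝ)])
    rw [div_le_iff₀ h1r] at h3; linarith
  have hnup : (1 - r) * n ≤ n₀ + 2 := by
    have := (Nat.ceil_lt_add_one (by positivity : 0 ≤ 1 / (1 - r))).le
    have h3 : (n:ℝ) ≤ n₀ + (1 / (1 - r) + 1) := by rw [hn]; push_cast; linarith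
    have h4 := mul_le_mul_of_nonneg_left h3 h1r.le
    have h5 : (1 - r) * (1 / (1 - r)) = 1 := by field_simp
    have h6 : (0:ℝ) ≤ n₀ := n₀.cast_nonneg
    nlinarith
  refine ⟨n, ?_, le_max_of_le_right ?_⟩
  · set ρ := (1 + r) / 2 with hρ
    have hρ0 : 0 < ρ := by rw [hρ]; linarith
    have hρ1 : ρ < 1 := by rw [hρ]; linarith
    have hk0 : n₀ ≤ A * n := hn0.trans (Nat.le_mul_of_pos_left n hA1)
    have e1 := hM (A * n) hk0 2 (by norm_num)
    have hpow : D * ρ ^ (((A * n : ℕ) : ℝ) * p) ≤ 1 / 2 := by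
      have f1 : ρ ≤ exp (-((1 - r) / 2)) := by
        have := Real.add_one_le_exp (-((1 - r) / 2))
        rw [hρ]; linarith
      have f2 : ρ ^ (((A * n : ℕ) : ℝ) * p) ≤ exp (-((1 - r) / 2)) ^ (((A * n : ℕ) : ℝ) * p) :=
        Real.rpow_le_rpow hρ0.le f1 (by positivity)
      rw [← Real.exp_mul] at f2
      have f3 : -((1 - r) / 2) * (((A * n : ℕ) : ℝ) * p) ≤ - log (2 * D) := by
        push_cast
        have : p * A / 2 * 1 ≤ p * A / 2 * ((1 - r) * n) := by gcongr
        nlinarith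
      have f4 := f2.trans (Real.exp_le_exp.2 f3)
      rw [Real.exp_neg, Real.exp_log (by linarith)] at f4
      calc D * ρ ^ (((A * n : ℕ) : ℝ) * p) ≤ D * (2 * D)⁻¹ := by gcongr
        _ = 1 / 2 := by field_simp
    have e2 := h.mom_le_tail (x := ((A * n : ℕ) : ℝ) * p) (ρ := ρ) (D := D) (by positivity) hρ0 hρ1
      (by
        refine e1.trans (le_of_eq ?_)
        rw [hD]; push_cast
        congr 2
        ring) (by linarith) hpow
    have e3 := hM n hn0 A hA1
    have e4 := mul_le_mul_of_nonneg_left e2 (by positivity : 0 ≤ C ^ 2 * (A:ℝ) ^ b)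
    calc mom W (n * p + 1) ≤ _ := e3.trans e4
      _ = (C ^ 2 * (A:ℝ) ^ b * (2 * D)) * tailInt W ρ := by ring
      _ ≤ _ := mul_le_mul_of_nonneg_right (le_max_left _ _) (h.tail_nonneg hρ1.le)
  · apply Real.exp_le_exp.2
    have := mul_le_mul_of_nonneg_right hnup hp.le
    nlinarith

/-- Comparability of the moments along the exponents `n p + 1` puts the weight in `D̂ ∩ Ď`. -/
lemma dhat_dcheck_of_mom (h : NiceWeight W) {p C : ℝ} (hp : 0 < p) (hC : 1 ≤ C)
    (h1 : ∀ n : ℕ, mom (assocW W) (n * p + 1) ≤ C * mom W (n * p + 1))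
    (h2 : ∀ n : ℕ, mom W (n * p + 1) ≤ C * mom (assocW W) (n * p + 1)) :
    Dhat W ∧ Dcheck W := by
  obtain ⟨E, hE1, hE⟩ := h.exists_mom_le_tail hp hC h1 h2
  have hm0 : ∀ n : ℕ, 0 ≤ mom W (n * p + 1) := fun n =>
    intervalIntegral.integral_nonneg zero_le_one fun s hs =>
      mul_nonneg (Real.rpow_nonneg hs.1 _) (h.nonneg s)
  constructor
  · have h34 : 0 < tailInt W (3 / 4) := h.pos _ ⟨by norm_num, by norm_num⟩
    refine ⟨max (E * E) (tailInt W 0 / tailInt W (3 / 4)),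
      le_max_of_le_left (one_le_mul_of_one_le_of_one_le hE1 hE1), fun r hr => ?_⟩
    have ht := h.tail_nonneg (r := (1 + r) / 2) (by linarith [hr.2])
    rcases le_total (1 / 2) r with hh | hh
    · obtain ⟨n, e1, e2⟩ := hE r hh hr.2
      refine le_trans ?_ (mul_le_mul_of_nonneg_right (le_max_left _ _) ht)
      calc tailInt W r ≤ exp (2 * (1 - r) * (n * p + 1)) * mom W (n * p + 1) :=
            h.tail_le_mom hh hr.2.le (by positivity)
        _ ≤ E * (E * tailInt W ((1 + r) / 2)) := by
            have := hm0 n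
            gcongr
        _ = _ := by ring
    · refine le_trans ?_ (mul_le_mul_of_nonneg_right (le_max_right _ _) ht)
      have e1 := h.tail_anti hr.1
      have e2 := h.tail_anti (show (1 + r) / 2 ≤ 3 / 4 by linarith)
      rw [div_mul_eq_mul_div, le_div_iff₀ h34]
      have := h.tail_nonneg hr.2.le
      gcongr
      exact h.tail_nonneg zero_le_one
  · -- for `1/2 ≤ r` one has `log K * ω̂(1 - (1-r)/K) ≤ B * ω̂(r)`
    set B := E * (C * E) with hB
    have hB1 : 1 ≤ B :=
      one_le_mul_of_one_le_of_one_le hE1 (one_le_mul_of_one_le_of_one_le hC hE1)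
    have key : ∀ r : ℝ, 1 / 2 ≤ r → r < 1 → ∀ K : ℝ, 1 < K →
        log K * tailInt W (1 - (1 - r) / K) ≤ B * tailInt W r := by
      intro r hr hr1 K hK
      obtain ⟨n, e1, e2⟩ := hE r hr hr1
      have e3 := h.log_mul_tail_le_mom (y := n * p + 1) hr hr1 (by positivity) hK
      have e4 := h.tail_anti (show r ≤ (1 + r) / 2 by linarith)
      have := hm0 n
      calc _ ≤ _ := e3
        _ ≤ E * (C * (E * tailInt W r)) := by
            have : 0 ≤ C := by linarith
            have : 0 ≤ E := by linarith
            refine mul_le_mul e2 ((h1 n).trans ?_) ?_ this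
            · gcongr; exact e1.trans (by gcongr)
            · exact intervalIntegral.integral_nonneg zero_le_one fun s hs =>
                mul_nonneg (Real.rpow_nonneg hs.1 _) (h.assoc_nonneg hs.2)
        _ = _ := by rw [hB]; ring
    have hexp : 1 < exp (2 * B) := Real.one_lt_exp_iff.2 (by linarith)
    -- `K` with `log K ≥ 2 B`; the extra factor `2` handles `r < 1/2`, where `1 - r ≤ 2 (1 - 1/2)`
    refine ⟨2 * exp (2 * B), 2, by linarith, by norm_num, fun r hr => ?_⟩
    rcases le_total (1 / 2) r with hh | hh
    · have e1 := key r hh hr.2 (2 * exp (2 * B)) (by linarith)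
      have e2 : 2 * B ≤ log (2 * exp (2 * B)) := by
        rw [Real.le_log_iff_exp_le (by positivity)]; linarith
      have e3 := mul_le_mul_of_nonneg_right e2 (h.tail_nonneg
        (r := 1 - (1 - r) / (2 * exp (2 * B))) (by
          have : 0 ≤ (1 - r) / (2 * exp (2 * B)) := div_nonneg (by linarith [hr.2]) (by positivity)
          linarith))
      nlinarith
    · have e1 := key (1 / 2) le_rfl (by norm_num) (exp (2 * B)) hexp
      rw [Real.log_exp] at e1
      have e2 := h.tail_anti hh
      have e3 : tailInt W (1 - (1 - r) / (2 * exp (2 * B)))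
          ≤ tailInt W (1 - (1 - 1 / 2) / exp (2 * B)) := by
        apply h.tail_anti
        have : (1 - r) / (2 * exp (2 * B)) ≤ 1 / (2 * exp (2 * B)) := by
          gcongr; linarith [hr.1]
        have e4 : (1 - 1 / 2) / exp (2 * B) = 1 / (2 * exp (2 * B)) := by field_simp; norm_num
        rw [e4]; linarith
      nlinarith

end NiceWeight

/-! ### Comparison of the tails of `ω` and `ω̃` for `ω ∈ D` -/

namespace NiceWeight

variable {W : ℝ → ℝ}

lemma moment_tail_le (h : NiceWeight W) {a : ℝ} (ha1 : a ≤ 1) :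
    ∫ s in a..1, s * W s ≤ tailInt W a := by
  apply intervalIntegral.integral_mono_on ha1 _ (h.ii _ _)
  · intro s hs
    exact mul_le_of_le_one_left (h.nonneg s) hs.2
  · exact (h.ii _ _).continuousOn_mul continuous_id.continuousOn

lemma ii_mul (h : NiceWeight W) (a b : ℝ) : IntervalIntegrable (fun s => s * W s) volume a b :=
  (h.ii _ _).continuousOn_mul continuous_id.continuousOn

lemma tii_mul (h : NiceWeight W) {a b : ℝ} (ha : a ∈ Icc (0:ℝ) 1) (hb : b ∈ Icc (0:ℝ) 1) :
    IntervalIntegrable (fun s => s * assocW W s) volume a b :=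
  (h.tint' ha hb).continuousOn_mul continuous_id.continuousOn

/-- Under `D̂` the factor `s` in the tail of `s ω(s)` is harmless. -/
lemma tail_le_of_dhat (h : NiceWeight W) {C : ℝ} (hC : 1 ≤ C)
    (hD : ∀ r ∈ Ico (0:ℝ) 1, tailInt W r ≤ C * tailInt W ((1 + r) / 2)) {a : ℝ}
    (ha : a ∈ Ico (0:ℝ) 1) : tailInt W a ≤ 2 * C * ∫ s in a..1, s * W s := by
  set m := (1 + a) / 2 with hm
  have hm1 : m ≤ 1 := by rw [hm]; linarith [ha.2]
  have ham : a ≤ m := by rw [hm]; linarith [ha.2]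
  have hmh : 1 / 2 ≤ m := by rw [hm]; linarith [ha.1]
  have e1 : tailInt W m ≤ 2 * ∫ s in m..1, s * W s := by
    rw [← intervalIntegral.integral_const_mul]
    apply intervalIntegral.integral_mono_on hm1 (h.ii _ _) ((h.ii_mul _ _).const_mul _)
    intro s hs
    nlinarith [h.nonneg s, hs.1]
  have e2 : ∫ s in m..1, s * W s ≤ ∫ s in a..1, s * W s := by
    rw [← intervalIntegral.integral_add_adjacent_intervals (h.ii_mul a m) (h.ii_mul m 1)]
    have : 0 ≤ ∫ s in a..m, s * W s := intervalIntegral.integral_nonneg ham fun s hs =>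
      mul_nonneg (ha.1.trans hs.1) (h.nonneg s)
    linarith
  have e3 := hD a ha
  have : 0 ≤ C := by linarith
  calc tailInt W a ≤ C * tailInt W m := e3
    _ ≤ C * (2 * ∫ s in a..1, s * W s) := by gcongr; linarith
    _ = _ := by ring

/-- With `m = (1+a)/2` and `m' = (1+m)/2`, the interval `[m,m']` alone contributes at least
`ω̂(m')/4` to the tail of `s ω̃(s)`, and `D̂` applied twice bounds `ω̂(a)` by `ω̂(m')`. -/
lemma tail_le_assoc_of_dhat (h : NiceWeight W) {C : ℝ} (hC : 1 ≤ C)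
    (hD : ∀ r ∈ Ico (0:ℝ) 1, tailInt W r ≤ C * tailInt W ((1 + r) / 2)) {a : ℝ}
    (ha : a ∈ Ico (0:ℝ) 1) : tailInt W a ≤ 4 * C ^ 2 * ∫ s in a..1, s * assocW W s := by
  set m := (1 + a) / 2 with hm
  set m' := (1 + m) / 2 with hm'
  have hm1 : m < 1 := by rw [hm]; linarith [ha.2]
  have ham : a ≤ m := by rw [hm]; linarith [ha.2]
  have hmh : 1 / 2 ≤ m := by rw [hm]; linarith [ha.1]
  have hm1' : m' < 1 := by rw [hm']; linarith
  have hmm : m ≤ m' := by rw [hm']; linarith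
  have haI : a ∈ Icc (0:ℝ) 1 := ⟨ha.1, ha.2.le⟩
  have hmI : m ∈ Icc (0:ℝ) 1 := ⟨by linarith, hm1.le⟩
  have hmI' : m' ∈ Icc (0:ℝ) 1 := ⟨by linarith, hm1'.le⟩
  have h1I : (1:ℝ) ∈ Icc (0:ℝ) 1 := by simp
  have e1 : tailInt W m' / 4 ≤ ∫ s in m..m', s * assocW W s := by
    have : tailInt W m' / 4 = ∫ s in m..m', (tailInt W m' / (2 * (1 - m))) := by
      rw [intervalIntegral.integral_const, smul_eq_mul]
      have : m' - m = (1 - m) / 2 := by rw [hm']; ring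
      rw [this]
      have : 0 < 1 - m := by linarith
      field_simp; norm_num
    rw [this]
    apply intervalIntegral.integral_mono_on hmm intervalIntegrable_const (h.tii_mul hmI hmI')
    intro s hs
    have hs1 : 0 < 1 - s := by linarith [hs.2]
    have f1 := h.tail_anti hs.2
    have f2 := h.tail_nonneg hm1'.le
    have f3 : tailInt W m' / (1 - m) ≤ assocW W s := by
      rw [assocW]
      gcongr
      · exact f2.trans f1
      · exact hs.1
    have f4 : tailInt W m' / (2 * (1 - m)) = 1 / 2 * (tailInt W m' / (1 - m)) := by
      rw [mul_comm 2, ← div_div]; ring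
    rw [f4]
    refine mul_le_mul (hmh.trans hs.1) f3 (div_nonneg f2 (by linarith)) (by linarith [hs.1])
  have e2 : ∫ s in m..m', s * assocW W s ≤ ∫ s in a..1, s * assocW W s := by
    rw [← intervalIntegral.integral_add_adjacent_intervals (h.tii_mul haI hmI) (h.tii_mul hmI h1I),
      ← intervalIntegral.integral_add_adjacent_intervals (h.tii_mul hmI hmI') (h.tii_mul hmI' h1I)]
    have f1 : 0 ≤ ∫ s in a..m, s * assocW W s := intervalIntegral.integral_nonneg ham fun s hs =>
      mul_nonneg (ha.1.trans hs.1) (h.assoc_nonneg (hs.2.trans hm1.le))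
    have f2 : 0 ≤ ∫ s in m'..1, s * assocW W s :=
      intervalIntegral.integral_nonneg hm1'.le fun s hs =>
        mul_nonneg (hmI'.1.trans hs.1) (h.assoc_nonneg hs.2)
    linarith
  have e3 := hD a ha
  have e4 := hD m ⟨hmI.1, hm1⟩
  have : 0 ≤ C := by linarith
  calc tailInt W a ≤ C * (C * tailInt W m') := e3.trans (by gcongr)
    _ ≤ C * (C * (4 * ∫ s in a..1, s * assocW W s)) := by gcongr; linarith
    _ = _ := by ring

/-- The scaling `s ↦ 1 - (1-s)/K` maps `[a,1]` to `[1-(1-a)/K,1]` and preserves `ds/(1-s)`, so `Ď`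
makes the tail of `ω̃` contract. -/
lemma assoc_le_tail_of_dcheck (h : NiceWeight W) {K C : ℝ} (hK : 1 < K) (hC : 1 < C)
    (hD : ∀ r ∈ Ico (0:ℝ) 1, C * tailInt W (1 - (1 - r) / K) ≤ tailInt W r) {a : ℝ}
    (ha : a ∈ Ico (0:ℝ) 1) :
    ∫ s in a..1, s * assocW W s ≤ K * C / (C - 1) * tailInt W a := by
  have hK0 : 0 < K := by linarith
  have h1a : 0 < 1 - a := by linarith [ha.2]
  set ρ := 1 - (1 - a) / K with hρ
  have hρ1 : ρ < 1 := by have : 0 < (1 - a) / K := by positivity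
                         linarith
  have haρ : a ≤ ρ := by
    have : (1 - a) / K ≤ 1 - a := div_le_self h1a.le hK.le
    linarith
  have haI : a ∈ Icc (0:ℝ) 1 := ⟨ha.1, ha.2.le⟩
  have hρI : ρ ∈ Icc (0:ℝ) 1 := ⟨ha.1.trans haρ, hρ1.le⟩
  have h1I : (1:ℝ) ∈ Icc (0:ℝ) 1 := by simp
  set I := ∫ s in a..1, assocW W s with hI
  have e0 : ∫ s in a..1, s * assocW W s ≤ I := by
    apply intervalIntegral.integral_mono_on ha.2.le (h.tii_mul haI h1I) (h.tint' haI h1I)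
    intro s hs
    exact mul_le_of_le_one_left (h.assoc_nonneg hs.2) hs.2
  have e1 : I = (∫ s in a..ρ, assocW W s) + ∫ s in ρ..1, assocW W s :=
    (intervalIntegral.integral_add_adjacent_intervals (h.tint' haI hρI) (h.tint' hρI h1I)).symm
  have e2 : ∫ s in a..ρ, assocW W s ≤ K * tailInt W a := by
    have : ∫ s in a..ρ, assocW W s ≤ ∫ s in a..ρ, tailInt W a / (1 - ρ) := by
      apply intervalIntegral.integral_mono_on haρ (h.tint' haI hρI) intervalIntegrable_const
      intro s hs
      rw [assocW]
      have f1 := h.tail_anti hs.1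
      have f2 := h.tail_nonneg haI.2
      have f3 : 0 < 1 - ρ := by linarith
      gcongr
      exact hs.2
    refine this.trans ?_
    rw [intervalIntegral.integral_const, smul_eq_mul]
    have f1 : 1 - ρ = (1 - a) / K := by rw [hρ]; ring
    have f2 : (ρ - a) * (tailInt W a / (1 - ρ)) ≤ (1 - a) * (tailInt W a / (1 - ρ)) := by
      gcongr
      · exact div_nonneg (h.tail_nonneg haI.2) (by linarith)
    refine f2.trans (le_of_eq ?_)
    rw [f1]; field_simp
  have e3 : C * ∫ s in ρ..1, assocW W s ≤ I := by
    have f1 : ∫ s in ρ..1, assocW W s = ∫ u in a..1, K⁻¹ * assocW W (1 - K⁻¹ + K⁻¹ * u) := by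
      rw [intervalIntegral.integral_const_mul,
        intervalIntegral.mul_integral_comp_add_mul]
      congr 1
      · rw [hρ]; field_simp; ring
      · field_simp; ring
    have hmaps : IntervalIntegrable (fun u => K⁻¹ * assocW W (1 - K⁻¹ + K⁻¹ * u)) volume a 1 := by
      apply IntervalIntegrable.const_mul
      have := (h.tint' hρI h1I).comp_add_left (1 - K⁻¹)
      have := this.comp_mul_left (c := K⁻¹)
      convert this using 1
      · rw [hρ]; field_simp; ring
      · field_simp; ring
    rw [f1, ← intervalIntegral.integral_const_mul, hI]
    apply intervalIntegral.integral_mono_on ha.2.le (hmaps.const_mul _) (h.tint' haI h1I)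
    intro u hu
    rcases hu.2.eq_or_lt with h1 | h1
    · subst h1; simp [assocW]
    · have h2 : 0 < 1 - u := by linarith
      have f2 := hD u ⟨ha.1.trans hu.1, h1⟩
      have f3 : 1 - K⁻¹ + K⁻¹ * u = 1 - (1 - u) / K := by field_simp; ring
      rw [f3, assocW, assocW, sub_sub_cancel]
      calc C * (K⁻¹ * (tailInt W (1 - (1 - u) / K) / ((1 - u) / K)))
          = C * tailInt W (1 - (1 - u) / K) / (1 - u) := by field_simp
        _ ≤ _ := by gcongr
  have hC1 : 0 < C - 1 := by linarith
  refine e0.trans ?_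
  rw [div_mul_eq_mul_div, le_div_iff₀ hC1]
  nlinarith

end NiceWeight

/-! ### Polar coordinates and the layer cake formula -/

/-- The norm only depends on the weight up to null sets of `[0,1)`; both weights and `f` are
arbitrary functions here. -/
lemma ApNorm_congr {ω₁ ω₂ : ℝ → ℝ} (p : ℝ) (f : ℂ → ℂ)
    (h : ω₁ =ᵐ[volume.restrict (Ico (0:ℝ) 1)] ω₂) : ApNorm p ω₁ f = ApNorm p ω₂ f := by
  unfold ApNorm
  congr 1
  rw [← integral_indicator measurableSet_ball, ← integral_indicator measurableSet_ball,
    ← Complex.integral_comp_polarCoord_symm, ← Complex.integral_comp_polarCoord_symm]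
  apply integral_congr_ae
  have h1 : ∀ᵐ r : ℝ, r ∈ Ico (0:ℝ) 1 → ω₁ r = ω₂ r := (ae_restrict_iff' measurableSet_Ico).1 h
  have h2 : ∀ᵐ q : ℝ × ℝ, q.1 ∈ Ico (0:ℝ) 1 → ω₁ q.1 = ω₂ q.1 :=
    Measure.quasiMeasurePreserving_fst.ae h1
  have ht : MeasurableSet polarCoord.target := polarCoord.open_target.measurableSet
  filter_upwards [ae_restrict_of_ae h2, ae_restrict_mem ht] with q hq hqt
  rw [polarCoord_target] at hqt
  have hq0 : 0 < q.1 := hqt.1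
  congr 1
  by_cases hb : Complex.polarCoord.symm q ∈ ball (0:ℂ) 1
  · rw [indicator_of_mem hb, indicator_of_mem hb]
    have hn := Complex.norm_polarCoord_symm q
    rw [abs_of_pos hq0] at hn
    rw [mem_ball_zero_iff, hn] at hb
    rw [hn, hq ⟨hq0.le, hb⟩]
  · rw [indicator_of_notMem hb, indicator_of_notMem hb]

/-- The radial form of the `A^p_W`-norm, as an extended integral against the circular means. -/
noncomputable def radialInt (A W : ℝ → ℝ) : ENNReal :=
  ∫⁻ r in Ioo (0:ℝ) 1, ENNReal.ofReal (A r) * ENNReal.ofReal (r * W r)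

lemma lintegral_circle {u : ℂ → ℝ} {r : ℝ} (hu : ContinuousOn u (sphere 0 |r|))
    (hn : ∀ z, 0 ≤ u z) :
    ∫⁻ θ in Ioo (-π) π, ENNReal.ofReal (u (Complex.polarCoord.symm (r, θ)))
      = ENNReal.ofReal (2 * π * circleAverage u 0 r) := by
  have hmap : ∀ θ : ℝ, Complex.polarCoord.symm (r, θ) = circleMap 0 r θ := by
    intro θ
    rw [Complex.polarCoord_symm_apply, circleMap_zero, Complex.exp_mul_I, Complex.ofReal_cos,
      Complex.ofReal_sin]
  simp_rw [hmap]
  have hc : Continuous fun θ : ℝ => u (circleMap 0 r θ) :=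
    hu.comp_continuous (continuous_circleMap 0 r) fun θ => by simp
  have hint : IntegrableOn (fun θ : ℝ => u (circleMap 0 r θ)) (Ioo (-π) π) :=
    (hc.integrableOn_Icc).mono_set Ioo_subset_Icc_self
  rw [← ofReal_integral_eq_lintegral_ofReal hint (ae_of_all _ fun θ => hn _)]
  congr 1
  rw [circleAverage_eq_integral_add (-π),
    intervalIntegral.integral_comp_add_right (fun θ => u (circleMap 0 r θ)), smul_eq_mul,
    ← mul_assoc, mul_inv_cancel₀ (by positivity), one_mul, ← integral_Ioc_eq_integral_Ioo,
    intervalIntegral.integral_of_le (by linarith [pi_pos])]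
  congr 3 <;> ring

lemma lintegral_ball_eq {u : ℂ → ℝ} (hu : ContinuousOn u (ball 0 1)) (hn : ∀ z, 0 ≤ u z)
    {W : ℝ → ℝ} (hW : Measurable W) :
    ∫⁻ z in ball (0:ℂ) 1, ENNReal.ofReal (u z * W ‖z‖)
      = ENNReal.ofReal (2 * π) * radialInt (circleAverage u 0) W := by
  have hum : Measurable ((ball (0:ℂ) 1).indicator u) := by
    classical
    have := hu.measurable_piecewise (g := fun _ => (0:ℝ)) continuousOn_const measurableSet_ball
    convert this using 1
    ext z; by_cases hz : z ∈ ball (0:ℂ) 1 <;> simp [hz, piecewise]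
  set G : ℂ → ENNReal := fun z => ENNReal.ofReal ((ball (0:ℂ) 1).indicator u z)
    * ENNReal.ofReal (W ‖z‖) with hG
  have hGm : Measurable G :=
    hum.ennreal_ofReal.mul (hW.comp measurable_norm).ennreal_ofReal
  have h1 : ∫⁻ z in ball (0:ℂ) 1, ENNReal.ofReal (u z * W ‖z‖) = ∫⁻ z, G z := by
    rw [← lintegral_indicator measurableSet_ball]
    apply lintegral_congr
    intro z
    by_cases hz : z ∈ ball (0:ℂ) 1
    · simp only [hG, indicator_of_mem hz]
      exact ENNReal.ofReal_mul (hn z)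
    · simp [hG, indicator_of_notMem hz]
  have hpm : Measurable fun q : ℝ × ℝ => Complex.polarCoord.symm q := by
    simp_rw [Complex.polarCoord_symm_apply]; fun_prop
  rw [h1, ← Complex.lintegral_comp_polarCoord_symm, polarCoord_target, Measure.volume_eq_prod,
    ← Measure.prod_restrict, lintegral_prod _ (by
      apply Measurable.aemeasurable
      exact (measurable_fst.ennreal_ofReal).mul (hGm.comp hpm)), radialInt]
  have h2 : ∀ r ∈ Ioi (0:ℝ), ∫⁻ θ in Ioo (-π) π,
      ENNReal.ofReal r • G (Complex.polarCoord.symm (r, θ))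
      = (Ioo (0:ℝ) 1).indicator (fun r => ENNReal.ofReal (2 * π) *
        (ENNReal.ofReal (circleAverage u 0 r) * ENNReal.ofReal (r * W r))) r := by
    intro r hr
    have hr : 0 < r := hr
    have hnorm : ∀ θ : ℝ, ‖Complex.polarCoord.symm (r, θ)‖ = r := fun θ => by
      rw [Complex.norm_polarCoord_symm, abs_of_pos hr]
    by_cases hr1 : r < 1
    · rw [indicator_of_mem (show r ∈ Ioo (0:ℝ) 1 from ⟨hr, hr1⟩)]
      have hmem : ∀ θ : ℝ, Complex.polarCoord.symm (r, θ) ∈ ball (0:ℂ) 1 := fun θ => by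
        rw [mem_ball_zero_iff, hnorm]; exact hr1
      have hsph : sphere (0:ℂ) |r| ⊆ ball 0 1 := by
        intro z hz
        rw [mem_sphere_zero_iff_norm, abs_of_pos hr] at hz
        rw [mem_ball_zero_iff, hz]; exact hr1
      have : ∀ θ : ℝ, ENNReal.ofReal r • G (Complex.polarCoord.symm (r, θ))
          = ENNReal.ofReal (r * W r) * ENNReal.ofReal (u (Complex.polarCoord.symm (r, θ))) := by
        intro θ
        simp only [hG, indicator_of_mem (hmem θ), hnorm θ, smul_eq_mul]
        rw [ENNReal.ofReal_mul hr.le]; ring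
      simp_rw [this]
      rw [lintegral_const_mul' _ _ ENNReal.ofReal_ne_top, lintegral_circle (hu.mono hsph) hn,
        ENNReal.ofReal_mul (by positivity : (0:ℝ) ≤ 2 * π)]
      ring
    · rw [indicator_of_notMem (fun h => hr1 h.2)]
      have : ∀ θ : ℝ, G (Complex.polarCoord.symm (r, θ)) = 0 := by
        intro θ
        have : Complex.polarCoord.symm (r, θ) ∉ ball (0:ℂ) 1 := by
          rw [mem_ball_zero_iff, hnorm]; exact hr1
        simp only [hG, indicator_of_notMem this]
        simp
      simp only [this, smul_zero, lintegral_zero]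
  have hsub : Ioo (0:ℝ) 1 ∩ Ioi 0 = Ioo 0 1 := inter_eq_left.2 Ioo_subset_Ioi_self
  rw [setLIntegral_congr_fun measurableSet_Ioi h2, lintegral_indicator measurableSet_Ioo,
    Measure.restrict_restrict measurableSet_Ioo,
    hsub, lintegral_const_mul' _ _ ENNReal.ofReal_ne_top]

lemma continuousOn_norm_rpow {f : ℂ → ℂ} (hf : DifferentiableOn ℂ f (ball 0 1)) {p : ℝ}
    (hp : 0 < p) : ContinuousOn (fun z => ‖f z‖ ^ p) (ball 0 1) :=
  hf.continuousOn.norm.rpow_const fun _ _ => Or.inr hp.le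

/-- Both sides are `0` when `f` is not in the weighted Bergman space. -/
lemma ApNorm_eq {f : ℂ → ℂ} (hf : DifferentiableOn ℂ f (ball 0 1)) {p : ℝ} (hp : 0 < p)
    {W : ℝ → ℝ} (hW : Measurable W) (hWn : ∀ r ≤ 1, 0 ≤ W r) :
    ApNorm p W f = 2 * (radialInt (circleAverage (fun z => ‖f z‖ ^ p) 0) W).toReal := by
  have hc := continuousOn_norm_rpow hf hp
  unfold ApNorm
  rw [integral_eq_lintegral_of_nonneg_ae, lintegral_ball_eq hc (fun z => by positivity) hW,
    ENNReal.toReal_mul, ENNReal.toReal_ofReal (by positivity), ← mul_assoc]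
  · congr 1
    field_simp
  · filter_upwards [ae_restrict_mem measurableSet_ball] with z hz
    have : ‖z‖ ≤ 1 := (mem_ball_zero_iff.1 hz).le
    exact mul_nonneg (by positivity) (hWn _ this)
  · exact (hc.aestronglyMeasurable measurableSet_ball).mul
      (hW.comp measurable_norm).aestronglyMeasurable

/-- Layer cake: the superlevel sets of an increasing `A` are, up to a null set, intervals `(a,1)`, so
domination of the tails of the weights gives domination of the integrals of `A`. -/
lemma radialInt_le {A W₁ W₂ : ℝ → ℝ} (hA : MonotoneOn A (Ioo 0 1)) (hA0 : ∀ r, 0 ≤ A r)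
    (hAm : AEMeasurable A (volume.restrict (Ioo 0 1)))
    (h₁ : Measurable W₁) (h₂ : Measurable W₂) {c : ENNReal} (hc : c ≠ ⊤)
    (h : ∀ a ∈ Ico (0:ℝ) 1, ∫⁻ r in Ioo a 1, ENNReal.ofReal (r * W₁ r)
      ≤ c * ∫⁻ r in Ioo a 1, ENNReal.ofReal (r * W₂ r)) :
    radialInt A W₁ ≤ c * radialInt A W₂ := by
  set ν := volume.restrict (Ioo (0:ℝ) 1) with hν
  have hcake : ∀ W : ℝ → ℝ, Measurable W → radialInt A W = ∫⁻ t in Ioi (0:ℝ),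
      (ν.withDensity fun r => ENNReal.ofReal (r * W r)) {r | t < A r} := by
    intro W hW
    have hd : Measurable fun r : ℝ => ENNReal.ofReal (r * W r) := by fun_prop
    rw [← lintegral_eq_lintegral_meas_lt _ (ae_of_all _ hA0)
      (hAm.mono_ac (withDensity_absolutelyContinuous _ _)),
      lintegral_withDensity_eq_lintegral_mul₀ hd.aemeasurable hAm.ennreal_ofReal, radialInt]
    apply lintegral_congr
    intro r
    rw [Pi.mul_apply, mul_comm]
  rw [hcake W₁ h₁, hcake W₂ h₂, ← lintegral_const_mul' _ _ hc]
  apply lintegral_mono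
  intro t
  beta_reduce
  -- up to endpoints the superlevel set is an interval `(a,1)`
  have hset : ∃ S : Set ℝ, (S = ∅ ∨ ∃ a ∈ Ico (0:ℝ) 1, S = Ioo a 1) ∧
      S =ᵐ[ν] {r | t < A r} := by
    by_cases hne : ({r | t < A r} ∩ Ioo 0 1).Nonempty
    · set S₀ := {r | t < A r} ∩ Ioo 0 1 with hS₀
      have hbdd : BddBelow S₀ := ⟨0, fun r hr => hr.2.1.le⟩
      obtain ⟨x, hx⟩ := hne
      have ha0 : 0 ≤ sInf S₀ := le_csInf ⟨x, hx⟩ fun r hr => hr.2.1.le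
      have ha1 : sInf S₀ < 1 := (csInf_le hbdd hx).trans_lt hx.2.2
      refine ⟨Ioo (sInf S₀) 1, Or.inr ⟨_, ⟨ha0, ha1⟩, rfl⟩, ?_⟩
      have hne' : ∀ᵐ r ∂ν, r ≠ sInf S₀ := Measure.ae_ne _ _
      filter_upwards [hne', ae_restrict_mem measurableSet_Ioo] with r hr hr01
      apply propext
      constructor
      · intro hrI
        obtain ⟨y, hy, hyr⟩ := exists_lt_of_csInf_lt ⟨x, hx⟩ hrI.1
        exact lt_of_lt_of_le hy.1 (hA hy.2 hr01 hyr.le)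
      · intro htr
        exact ⟨lt_of_le_of_ne (csInf_le hbdd ⟨htr, hr01⟩) hr.symm, hr01.2⟩
    · refine ⟨∅, Or.inl rfl, ?_⟩
      filter_upwards [ae_restrict_mem measurableSet_Ioo] with r hr01
      apply propext
      exact ⟨fun h => h.elim, fun htr => hne ⟨r, htr, hr01⟩⟩
  obtain ⟨S, hS, hae⟩ := hset
  rw [← measure_congr ((withDensity_absolutelyContinuous ν _).ae_eq hae),
    ← measure_congr ((withDensity_absolutelyContinuous ν _).ae_eq hae)]
  rcases hS with rfl | ⟨a, ha, rfl⟩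
  · simp
  · have hsub : Ioo a 1 ∩ Ioo 0 1 = Ioo a 1 :=
      inter_eq_left.2 (Ioo_subset_Ioo_left ha.1)
    rw [withDensity_apply _ measurableSet_Ioo, withDensity_apply _ measurableSet_Ioo, hν,
      Measure.restrict_restrict measurableSet_Ioo, hsub]
    exact h a ha

lemma lintegral_tail {w : ℝ → ℝ} {a : ℝ} (ha : a ∈ Ico (0:ℝ) 1)
    (hi : IntervalIntegrable (fun s => s * w s) volume a 1) (hn : ∀ r ≤ 1, 0 ≤ w r) :
    ∫⁻ r in Ioo a 1, ENNReal.ofReal (r * w r) = ENNReal.ofReal (∫ s in a..1, s * w s) := by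
  rw [intervalIntegral.integral_of_le ha.2.le, integral_Ioc_eq_integral_Ioo,
    ofReal_integral_eq_lintegral_ofReal]
  · exact ((intervalIntegrable_iff_integrableOn_Ioc_of_le ha.2.le).1 hi).mono_set Ioo_subset_Ioc_self
  · filter_upwards [ae_restrict_mem measurableSet_Ioo] with r hr
    exact mul_nonneg (ha.1.trans hr.1.le) (hn r hr.2.le)

/-- Tail domination of `s W₁(s)` by `s W₂(s)` passes to the norms once both weights dominate each
other; the two-sided hypothesis makes the two norms finite simultaneously. -/
lemma ApNorm_le {f : ℂ → ℂ} (hf : DifferentiableOn ℂ f (ball 0 1)) {p : ℝ} (hp : 0 < p)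
    {W₁ W₂ : ℝ → ℝ} (h₁ : Measurable W₁) (h₂ : Measurable W₂)
    (hn₁ : ∀ r ≤ 1, 0 ≤ W₁ r) (hn₂ : ∀ r ≤ 1, 0 ≤ W₂ r)
    (hi₁ : ∀ a ∈ Ico (0:ℝ) 1, IntervalIntegrable (fun s => s * W₁ s) volume a 1)
    (hi₂ : ∀ a ∈ Ico (0:ℝ) 1, IntervalIntegrable (fun s => s * W₂ s) volume a 1) {C : ℝ}
    (hC : 0 ≤ C)
    (h12 : ∀ a ∈ Ico (0:ℝ) 1, ∫ s in a..1, s * W₁ s ≤ C * ∫ s in a..1, s * W₂ s)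
    (h21 : ∀ a ∈ Ico (0:ℝ) 1, ∫ s in a..1, s * W₂ s ≤ C * ∫ s in a..1, s * W₁ s) :
    ApNorm p W₁ f ≤ C * ApNorm p W₂ f := by
  rw [ApNorm_eq hf hp h₁ hn₁, ApNorm_eq hf hp h₂ hn₂]
  set A := circleAverage (fun z => ‖f z‖ ^ p) 0 with hA
  have hmono : MonotoneOn A (Ioo 0 1) := fun r hr s hs hrs =>
    circleAverage_norm_rpow_mono hf hp hr.1.le hrs hs.2
  have hA0 : ∀ r, 0 ≤ A r := fun r => circleAverage_nonneg_of_nonneg fun z _ => by positivity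
  have hAm : AEMeasurable A (volume.restrict (Ioo 0 1)) :=
    aemeasurable_restrict_of_monotoneOn measurableSet_Ioo hmono
  have e12 : radialInt A W₁ ≤ ENNReal.ofReal C * radialInt A W₂ := by
    apply radialInt_le hmono hA0 hAm h₁ h₂ ENNReal.ofReal_ne_top
    intro a ha
    rw [lintegral_tail ha (hi₁ a ha) hn₁, lintegral_tail ha (hi₂ a ha) hn₂, ← ENNReal.ofReal_mul hC]
    exact ENNReal.ofReal_le_ofReal (h12 a ha)
  have e21 : radialInt A W₂ ≤ ENNReal.ofReal C * radialInt A W₁ := by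
    apply radialInt_le hmono hA0 hAm h₂ h₁ ENNReal.ofReal_ne_top
    intro a ha
    rw [lintegral_tail ha (hi₁ a ha) hn₁, lintegral_tail ha (hi₂ a ha) hn₂, ← ENNReal.ofReal_mul hC]
    exact ENNReal.ofReal_le_ofReal (h21 a ha)
  by_cases htop : radialInt A W₂ = ⊤
  · have : radialInt A W₁ = ⊤ := by
      by_contra hne
      rw [htop] at e21
      exact absurd (top_le_iff.1 e21) (ENNReal.mul_ne_top ENNReal.ofReal_ne_top hne)
    simp [this, htop]
  · have := ENNReal.toReal_mono (ENNReal.mul_ne_top ENNReal.ofReal_ne_top htop) e12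
    rw [ENNReal.toReal_mul, ENNReal.toReal_ofReal hC] at this
    linarith

/-! ### The equivalence -/

/-- The test functions of the necessity part: norms of monomials are moments. -/
lemma ApNorm_monomial {p : ℝ} (hp : 0 < p) {w : ℝ → ℝ} (hw : Measurable w)
    (hn : ∀ r ≤ 1, 0 ≤ w r) (n : ℕ) :
    ApNorm p w (fun z => z ^ n) = 2 * mom w (n * p + 1) := by
  rw [ApNorm_eq (by fun_prop) hp hw hn, mom, intervalIntegral.integral_of_le zero_le_one,
    integral_Ioc_eq_integral_Ioo, integral_eq_lintegral_of_nonneg_ae, radialInt]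
  · congr 2
    apply setLIntegral_congr_fun measurableSet_Ioo
    intro r hr
    have h1 : circleAverage (fun z : ℂ => ‖z ^ n‖ ^ p) 0 r = r ^ (n * p) := by
      apply circleAverage_const_on_circle
      intro z hz
      rw [mem_sphere_zero_iff_norm, abs_of_pos hr.1] at hz
      rw [norm_pow, hz, ← Real.rpow_natCast, ← Real.rpow_mul hr.1.le]
    simp only [h1]
    rw [← ENNReal.ofReal_mul (Real.rpow_nonneg hr.1.le _), Real.rpow_add hr.1, Real.rpow_one,
      mul_assoc]
  · filter_upwards [ae_restrict_mem measurableSet_Ioo] with r hr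
    exact mul_nonneg (Real.rpow_nonneg hr.1.le _) (hn r hr.2.le)
  · exact (by fun_prop : Measurable fun r : ℝ => r ^ ((n:ℝ) * p + 1) * w r).aestronglyMeasurable

/-- The theorem for a Borel representative of the weight. -/
lemma nice_iff {W : ℝ → ℝ} (h : NiceWeight W) {p : ℝ} (hp : 0 < p) :
    (∃ C : ℝ, 1 ≤ C ∧ ∀ f : ℂ → ℂ, DifferentiableOn ℂ f (Metric.ball (0:ℂ) 1) →
        C⁻¹ * ApNorm p (assocW W) f ≤ ApNorm p W f ∧
          ApNorm p W f ≤ C * ApNorm p (assocW W) f) ↔ (Dhat W ∧ Dcheck W) := by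
  have hn₁ : ∀ r ≤ 1, 0 ≤ W r := fun r _ => h.nonneg r
  have hn₂ : ∀ r ≤ 1, 0 ≤ assocW W r := fun r hr => h.assoc_nonneg hr
  constructor
  · rintro ⟨C, hC, hf⟩
    have hC0 : 0 < C := by linarith
    refine h.dhat_dcheck_of_mom hp hC (fun n => ?_) fun n => ?_
    · have := (hf (fun z => z ^ n) (by fun_prop)).1
      rw [ApNorm_monomial hp h.meas hn₁, ApNorm_monomial hp h.assoc_meas hn₂,
        inv_mul_le_iff₀ hC0] at this
      linarith
    · have := (hf (fun z => z ^ n) (by fun_prop)).2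
      rw [ApNorm_monomial hp h.meas hn₁, ApNorm_monomial hp h.assoc_meas hn₂] at this
      linarith
  · rintro ⟨⟨C₁, hC₁, hD⟩, ⟨K, C₂, hK, hC₂, hD'⟩⟩
    have hC21 : 0 < C₂ - 1 := by linarith
    set B := max (4 * C₁ ^ 2) (K * C₂ / (C₂ - 1) * (2 * C₁)) with hB
    have hB1 : 1 ≤ B := le_max_of_le_left (by nlinarith)
    have hB0 : 0 < B := by linarith
    have hI1 : (1:ℝ) ∈ Icc (0:ℝ) 1 := by simp
    have hi₁ : ∀ a ∈ Ico (0:ℝ) 1, IntervalIntegrable (fun s => s * W s) volume a 1 :=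
      fun a _ => h.ii_mul a 1
    have hi₂ : ∀ a ∈ Ico (0:ℝ) 1, IntervalIntegrable (fun s => s * assocW W s) volume a 1 :=
      fun a ha => h.tii_mul ⟨ha.1, ha.2.le⟩ hI1
    have h12 : ∀ a ∈ Ico (0:ℝ) 1, ∫ s in a..1, s * W s ≤ B * ∫ s in a..1, s * assocW W s := by
      intro a ha
      have hnn : 0 ≤ ∫ s in a..1, s * assocW W s :=
        intervalIntegral.integral_nonneg ha.2.le fun s hs =>
          mul_nonneg (ha.1.trans hs.1) (hn₂ s hs.2)
      exact ((h.moment_tail_le ha.2.le).trans (h.tail_le_assoc_of_dhat hC₁ hD ha)).trans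
        (mul_le_mul_of_nonneg_right (le_max_left _ _) hnn)
    have h21 : ∀ a ∈ Ico (0:ℝ) 1, ∫ s in a..1, s * assocW W s ≤ B * ∫ s in a..1, s * W s := by
      intro a ha
      have hnn : 0 ≤ ∫ s in a..1, s * W s :=
        intervalIntegral.integral_nonneg ha.2.le fun s hs =>
          mul_nonneg (ha.1.trans hs.1) (h.nonneg s)
      have e1 := mul_le_mul_of_nonneg_left (h.tail_le_of_dhat hC₁ hD ha)
        (by positivity : 0 ≤ K * C₂ / (C₂ - 1))
      refine ((h.assoc_le_tail_of_dcheck hK hC₂ hD' ha).trans e1).trans ?_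
      rw [← mul_assoc]
      exact mul_le_mul_of_nonneg_right (le_max_right _ _) hnn
    refine ⟨B, hB1, fun f hf => ⟨?_, ?_⟩⟩
    · rw [inv_mul_le_iff₀ hB0]
      exact ApNorm_le hf hp h.assoc_meas h.meas hn₂ hn₁ hi₂ hi₁ hB0.le h21 h12
    · exact ApNorm_le hf hp h.meas h.assoc_meas hn₁ hn₂ hi₁ hi₂ hB0.le h12 h21

/-- For `0 < p < ∞` and a radial weight `ω` with `ω̃` a weight, the two-sided
comparison `C⁻¹‖f‖_{A^p_{ω̃}} ≤ ‖f‖_{A^p_ω} ≤ C‖f‖_{A^p_{ω̃}}` (some `C ≥ 1`, all analytic `f`)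
holds if and only if `ω ∈ D = D̂ ∩ Ď` (norms stated via their `p`-th powers). -/
theorem statement6 (p : ℝ) (hp : 0 < p) (ω : ℝ → ℝ) (hω : RadialWeight ω)
    (hω' : MeasureTheory.IntegrableOn (assocW ω) (Set.Ico 0 1)) :
    (∃ C : ℝ, 1 ≤ C ∧ ∀ f : ℂ → ℂ, DifferentiableOn ℂ f (Metric.ball (0:ℂ) 1) →
        C⁻¹ * ApNorm p (assocW ω) f ≤ ApNorm p ω f ∧
          ApNorm p ω f ≤ C * ApNorm p (assocW ω) f) ↔
      (Dhat ω ∧ Dcheck ω) := by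
  obtain ⟨hnn, hint, hpos⟩ := hω
  -- a Borel representative, nonnegative everywhere and vanishing off `[0,1)`
  set W : ℝ → ℝ := (Ico (0:ℝ) 1).indicator fun r => |hint.1.mk ω r| with hW
  have hmk := hint.1.ae_eq_mk
  have hae : ω =ᵐ[volume.restrict (Ico (0:ℝ) 1)] W := by
    filter_upwards [hmk, ae_restrict_mem measurableSet_Ico] with r hr hr01
    rw [hW, indicator_of_mem hr01, ← hr, abs_of_nonneg (hnn r hr01)]
  have htail : ∀ r ∈ Icc (0:ℝ) 1, tailInt ω r = tailInt W r := by
    intro r hr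
    rw [tailInt, tailInt, intervalIntegral.integral_of_le hr.2, intervalIntegral.integral_of_le hr.2,
      integral_Ioc_eq_integral_Ioo, integral_Ioc_eq_integral_Ioo]
    apply integral_congr_ae
    exact ae_restrict_of_ae_restrict_of_subset
      (Ioo_subset_Ico_self.trans (Ico_subset_Ico_left hr.1)) hae
  have hassoc : ∀ r ∈ Ico (0:ℝ) 1, assocW ω r = assocW W r := fun r hr => by
    rw [assocW, assocW, htail r ⟨hr.1, hr.2.le⟩]
  have hassoc' : assocW ω =ᵐ[volume.restrict (Ico (0:ℝ) 1)] assocW W := by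
    filter_upwards [ae_restrict_mem measurableSet_Ico] with r hr using hassoc r hr
  have hnice : NiceWeight W :=
    { meas := by
        have : Measurable (hint.1.mk ω) := hint.1.stronglyMeasurable_mk.measurable
        exact (measurable_norm.comp this).indicator measurableSet_Ico
      nonneg := fun r => indicator_nonneg (fun _ _ => abs_nonneg _) r
      int := by
        rw [hW, integrable_indicator_iff measurableSet_Ico]
        exact (hint.congr hmk).abs
      pos := fun r hr => htail r ⟨hr.1, hr.2.le⟩ ▸ hpos r hr
      tint := (intervalIntegrable_iff_integrableOn_Ico_of_le zero_le_one).2 (hω'.congr hassoc') }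
  have hDhat : Dhat ω ↔ Dhat W := by
    unfold Dhat
    refine exists_congr fun C => and_congr_right fun _ => forall₂_congr fun r hr => ?_
    rw [htail r ⟨hr.1, hr.2.le⟩,
      htail ((1 + r) / 2) ⟨by linarith [hr.1], by linarith [hr.2]⟩]
  have hDcheck : Dcheck ω ↔ Dcheck W := by
    unfold Dcheck
    refine exists₂_congr fun K C => and_congr_right fun hK => and_congr_right fun _ =>
      forall₂_congr fun r hr => ?_
    have h1 : 0 ≤ (1 - r) / K := div_nonneg (by linarith [hr.2]) (by linarith)
    have h2 : (1 - r) / K ≤ 1 - r := div_le_self (by linarith [hr.2]) hK.le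
    rw [htail r ⟨hr.1, hr.2.le⟩,
      htail (1 - (1 - r) / K) ⟨by linarith [hr.1], by linarith⟩]
  rw [hDhat, hDcheck, ← nice_iff hnice hp]
  simp_rw [ApNorm_congr p _ hae, ApNorm_congr p _ hassoc']
end

section
/- Let ω be a radial weight. Then ω ∈ D = D̂ ∩ Ď if and only if ω̃ is a weight and ω̃ ∈ D = D̂ ∩ Ď. -/
/-!
Write `W = ω̂` (positive and decreasing on `[0,1)`) and `T(r) = ∫_r^1 W(s)/(1-s) ds` for the tail of
`ω̃`.  The measure `ds/(1-s)` is invariant under the dilations `u ↦ 1 - (1-u)/K`, so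
`T(1 - (1-r)/K) = ∫_r^1 W(1 - (1-u)/K)/(1-u) du` (`integral_dilate`).

*From `ω` to `ω̃`.*  Integrating the pointwise inequalities that define `D̂` and `Ď` for `W` against
`du/(1-u)` gives the same inequalities, with the same constants, for `T`.  Integrability of `ω̃`
also follows from `Ď`: if `I(b) = ∫_0^b W(s)/(1-s) ds`, invariance gives `I(b) ≤ A + I(b)/C` with
`A` independent of `b < 1`, hence `I` is bounded (`integrableOn_assocW`).

*From `ω̃` to `ω`.*  As `W` is decreasing, with `ρ = 1 - (1-r)/K`,
`(1 - 1/K) W(ρ) ≤ T(r) - T(ρ) ≤ (K - 1) W(r)` (`mul_le_tail_sub`, `tail_sub_le`).  If `ω̃ ∈ Ď`, the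
upper bound yields `T ≤ M W`.  Together with the lower bound for `K = 2` this compares `W` and `T`
up to a dilation by `2`, which transfers `D̂`, and also `Ď` once the `Ď` inequality of `T` has been
iterated often enough to absorb the constants.
-/

open MeasureTheory Set

section Helpers

variable {ω : ℝ → ℝ}

/-! ### Tails and dilations -/

lemma RadialWeight.intervalIntegrable (hω : RadialWeight ω) {a b : ℝ} (ha : 0 ≤ a) (hab : a ≤ b)
    (hb : b ≤ 1) : IntervalIntegrable ω volume a b := by
  rw [intervalIntegrable_iff_integrableOn_Ico_of_le hab]
  exact hω.2.1.mono_set (Ico_subset_Ico ha hb)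

lemma RadialWeight.antitoneOn (hω : RadialWeight ω) : AntitoneOn (tailInt ω) (Icc 0 1) := by
  intro a ha b hb hab
  unfold tailInt
  rw [← intervalIntegral.integral_add_adjacent_intervals
    (hω.intervalIntegrable ha.1 hab hb.2) (hω.intervalIntegrable hb.1 hb.2 le_rfl)]
  have : 0 ≤ ∫ s in a..b, ω s := by
    rw [intervalIntegral.integral_of_le hab, integral_Ioc_eq_integral_Ioo]
    exact setIntegral_nonneg measurableSet_Ioo fun x hx =>
      hω.1 x ⟨ha.1.trans hx.1.le, hx.2.trans_le hb.2⟩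
  linarith

lemma RadialWeight.tail_nonneg (hω : RadialWeight ω) {r : ℝ} (h0 : 0 ≤ r) (h1 : r ≤ 1) :
    0 ≤ tailInt ω r := by
  rcases h1.lt_or_eq with h | rfl
  · exact (hω.2.2 r ⟨h0, h⟩).le
  · simp [tailInt]

lemma dilate_mem {K u : ℝ} (hK : 1 < K) (h1 : u ≤ 1) :
    u ≤ 1 - (1 - u) / K ∧ 1 - (1 - u) / K ≤ 1 := by
  have h2 : (1 - u) / K ≤ 1 - u := div_le_self (by linarith) hK.le
  have h3 : 0 ≤ (1 - u) / K := div_nonneg (by linarith) (by linarith)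
  constructor <;> linarith

lemma dilate_lt {K u : ℝ} (hK : 1 < K) (h1 : u < 1) : 1 - (1 - u) / K < 1 := by
  have : 0 < (1 - u) / K := div_pos (by linarith) (by linarith)
  linarith

lemma intervalIntegrable_div {V : ℝ → ℝ} (hV : AntitoneOn V (Icc 0 1)) {a b : ℝ} (ha : 0 ≤ a)
    (hab : a ≤ b) (hb : b < 1) : IntervalIntegrable (fun s => V s / (1 - s)) volume a b := by
  simp only [div_eq_mul_inv]
  apply IntervalIntegrable.mul_continuousOn
  · apply AntitoneOn.intervalIntegrable
    rw [uIcc_of_le hab]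
    exact hV.mono (Icc_subset_Icc ha hb.le)
  · rw [uIcc_of_le hab]
    apply ContinuousOn.inv₀ (by fun_prop)
    intro x hx
    have := hx.2
    linarith

/-- Up to the endpoint `1`, integrability of `V(s)/(1-s)` is inherited by domination from `ω̃`. -/
lemma intervalIntegrable_div_one {V : ℝ → ℝ} (hI : IntegrableOn (assocW ω) (Ico 0 1))
    (hV : AntitoneOn V (Icc 0 1)) (h0 : ∀ u ∈ Icc (0 : ℝ) 1, 0 ≤ V u)
    (hle : ∀ u ∈ Icc (0 : ℝ) 1, V u ≤ tailInt ω u) {a : ℝ} (ha : 0 ≤ a) (ha1 : a ≤ 1) :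
    IntervalIntegrable (fun s => V s / (1 - s)) volume a 1 := by
  rw [intervalIntegrable_iff_integrableOn_Ico_of_le ha1]
  refine IntegrableOn.mono_set ?_ (Ico_subset_Ico_left ha)
  refine Integrable.mono hI ?_ ?_
  · have h1 : IntervalIntegrable V volume 0 1 := by
      apply AntitoneOn.intervalIntegrable
      rwa [uIcc_of_le zero_le_one]
    rw [intervalIntegrable_iff_integrableOn_Ico_of_le zero_le_one] at h1
    simp only [div_eq_mul_inv]
    exact h1.aestronglyMeasurable.mul (by fun_prop : Measurable fun s : ℝ =>
      (1 - s)⁻¹).aestronglyMeasurable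
  · refine (ae_restrict_iff' measurableSet_Ico).2 (Filter.Eventually.of_forall fun u hu => ?_)
    have hu' := Ico_subset_Icc_self hu
    have h2 : 0 < 1 - u := by linarith [hu.2]
    have h3 := h0 u hu'
    have h4 := hle u hu'
    rw [Real.norm_of_nonneg (div_nonneg h3 h2.le), assocW,
      Real.norm_of_nonneg (div_nonneg (h3.trans h4) h2.le)]
    gcongr

/-- Invariance of `ds/(1-s)` under `u ↦ 1 - (1-u)/K`. -/
lemma integral_dilate (W : ℝ → ℝ) {K : ℝ} (hK : 1 < K) (a b : ℝ) :
    ∫ s in (1 - (1 - a) / K)..(1 - (1 - b) / K), W s / (1 - s) =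
      ∫ u in a..b, W (1 - (1 - u) / K) / (1 - u) := by
  have hK0 : K ≠ 0 := by linarith
  have h := intervalIntegral.smul_integral_comp_mul_add (a := a) (b := b)
    (fun s => W s / (1 - s)) K⁻¹ (1 - K⁻¹)
  have e : ∀ x : ℝ, K⁻¹ * x + (1 - K⁻¹) = 1 - (1 - x) / K := by
    intro x; field_simp; ring
  simp only [e] at h
  rw [← h, smul_eq_mul, ← intervalIntegral.integral_const_mul]
  congr 1
  ext u
  rw [sub_sub_cancel, div_div_eq_mul_div, inv_mul_eq_div, div_div, div_eq_div_iff_comm]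
  by_cases hu : 1 - u = 0
  · simp [hu]
  · field_simp

lemma antitoneOn_dilate {W : ℝ → ℝ} (hW : AntitoneOn W (Icc 0 1)) {K : ℝ} (hK : 1 < K) :
    AntitoneOn (fun u => W (1 - (1 - u) / K)) (Icc 0 1) := by
  intro a ha b hb hab
  have h1 := dilate_mem hK ha.2
  have h2 := dilate_mem hK hb.2
  refine hW ⟨ha.1.trans h1.1, h1.2⟩ ⟨hb.1.trans h2.1, h2.2⟩ ?_
  have : 0 < K := by linarith
  gcongr

lemma tail_dilate {K : ℝ} (hK : 1 < K) (r : ℝ) :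
    tailInt (assocW ω) (1 - (1 - r) / K) =
      ∫ u in r..1, tailInt ω (1 - (1 - u) / K) / (1 - u) := by
  have h := integral_dilate (tailInt ω) hK r 1
  simpa [tailInt, assocW] using h

lemma RadialWeight.intervalIntegrable_assocW (hω : RadialWeight ω)
    (hI : IntegrableOn (assocW ω) (Ico 0 1)) {a : ℝ} (ha : 0 ≤ a) (ha1 : a ≤ 1) :
    IntervalIntegrable (assocW ω) volume a 1 :=
  intervalIntegrable_div_one hI hω.antitoneOn (fun _ hu => hω.tail_nonneg hu.1 hu.2)
    (fun _ _ => le_rfl) ha ha1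

lemma RadialWeight.intervalIntegrable_dilate (hω : RadialWeight ω)
    (hI : IntegrableOn (assocW ω) (Ico 0 1)) {K : ℝ} (hK : 1 < K) {a : ℝ} (ha : 0 ≤ a)
    (ha1 : a ≤ 1) :
    IntervalIntegrable (fun u => tailInt ω (1 - (1 - u) / K) / (1 - u)) volume a 1 := by
  refine intervalIntegrable_div_one hI (antitoneOn_dilate hω.antitoneOn hK) ?_ ?_ ha ha1
  · intro u hu
    have h := dilate_mem hK hu.2
    exact hω.tail_nonneg (hu.1.trans h.1) h.2
  · intro u hu
    have h := dilate_mem hK hu.2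
    exact hω.antitoneOn hu ⟨hu.1.trans h.1, h.2⟩ h.1

/-! ### Integrability of `ω̃` -/

lemma integrableOn_assocW (hω : RadialWeight ω) (hD : Dcheck ω) :
    IntegrableOn (assocW ω) (Ico 0 1) := by
  obtain ⟨K, C, hK, hC, h⟩ := hD
  have hK0 : 0 < K := by linarith
  have hC0 : 0 < C := by linarith
  have hnn : ∀ u ∈ Icc (0 : ℝ) 1, 0 ≤ assocW ω u := fun u hu =>
    div_nonneg (hω.tail_nonneg hu.1 hu.2) (by linarith [hu.2])
  have hii : ∀ {a b : ℝ}, 0 ≤ a → a ≤ b → b < 1 → IntervalIntegrable (assocW ω) volume a b :=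
    fun ha hab hb => intervalIntegrable_div hω.antitoneOn ha hab hb
  set A := ∫ s in (0 : ℝ)..(1 - (1 - 0) / K), assocW ω s with hA
  have key : ∀ b ∈ Ico (0 : ℝ) 1, ∫ s in (0 : ℝ)..b, assocW ω s ≤ A * C / (C - 1) := by
    intro b hb
    have hb' := dilate_mem hK hb.2.le
    have hb1 := dilate_lt hK hb.2
    have h0 := dilate_mem hK zero_le_one
    have h01 : 1 - (1 - 0) / K ≤ 1 - (1 - b) / K := by
      have := hb.1
      gcongr
    have e1 := intervalIntegral.integral_add_adjacent_intervals
      (hii le_rfl hb.1 hb.2) (hii hb.1 hb'.1 hb1)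
    have e2 := intervalIntegral.integral_add_adjacent_intervals
      (hii le_rfl h0.1 (h01.trans_lt hb1)) (hii h0.1 h01 hb1)
    have e3 : 0 ≤ ∫ s in b..(1 - (1 - b) / K), assocW ω s :=
      intervalIntegral.integral_nonneg hb'.1 fun u hu =>
        hnn u ⟨hb.1.trans hu.1, hu.2.trans hb'.2⟩
    have e4 : ∫ s in (1 - (1 - 0) / K)..(1 - (1 - b) / K), assocW ω s ≤
        C⁻¹ * ∫ s in (0 : ℝ)..b, assocW ω s := by
      have := integral_dilate (tailInt ω) hK 0 b
      change ∫ s in (1 - (1 - 0) / K)..(1 - (1 - b) / K), assocW ω s = _ at this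
      rw [this, ← intervalIntegral.integral_const_mul]
      refine intervalIntegral.integral_mono_on hb.1
        (intervalIntegrable_div (antitoneOn_dilate hω.antitoneOn hK) le_rfl hb.1 hb.2)
        ((hii le_rfl hb.1 hb.2).const_mul _) ?_
      intro u hu
      have hu1 : u < 1 := hu.2.trans_lt hb.2
      have h5 := h u ⟨hu.1, hu1⟩
      have h6 : 0 < 1 - u := by linarith
      rw [assocW, ← mul_div_assoc]
      gcongr
      rw [inv_mul_eq_div, le_div_iff₀ hC0]
      linarith
    have e5 : ∫ s in (0 : ℝ)..b, assocW ω s ≤ A + C⁻¹ * ∫ s in (0 : ℝ)..b, assocW ω s := by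
      linarith
    rw [le_div_iff₀ (by linarith)]
    have e6 := mul_le_mul_of_nonneg_left e5 hC0.le
    rw [mul_add, mul_inv_cancel_left₀ hC0.ne'] at e6
    linarith
  have hlim : Filter.Tendsto (fun n : ℕ => 1 - 1 / ((n : ℝ) + 1)) Filter.atTop (nhds 1) := by
    simpa using (tendsto_one_div_add_atTop_nhds_zero_nat (𝕜 := ℝ)).const_sub 1
  have hmem : ∀ n : ℕ, 1 - 1 / ((n : ℝ) + 1) ∈ Ico (0 : ℝ) 1 := by
    intro n
    have h1 : (0 : ℝ) < 1 / ((n : ℝ) + 1) := by positivity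
    have h2 : 1 / ((n : ℝ) + 1) ≤ 1 := by
      rw [div_le_one (by positivity)]
      linarith [(Nat.cast_nonneg n : (0 : ℝ) ≤ n)]
    constructor <;> linarith
  rw [← intervalIntegrable_iff_integrableOn_Ico_of_le zero_le_one,
    intervalIntegrable_iff_integrableOn_Ioc_of_le zero_le_one]
  refine integrableOn_Ioc_of_intervalIntegral_norm_bounded_right (l := Filter.atTop)
    (I := A * C / (C - 1)) ?_ hlim ?_
  · intro n
    have := hii le_rfl (hmem n).1 (hmem n).2
    rwa [intervalIntegrable_iff_integrableOn_Ioc_of_le (hmem n).1] at this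
  · refine Filter.Eventually.of_forall fun n => ?_
    refine le_trans (le_of_eq ?_) (key _ (hmem n))
    rw [intervalIntegral.integral_of_le (hmem n).1]
    refine setIntegral_congr_fun measurableSet_Ioc fun u hu => ?_
    exact Real.norm_of_nonneg (hnn u ⟨hu.1.le, hu.2.trans (hmem n).2.le⟩)

/-! ### Comparison of `ω̂` with the tail of `ω̃` -/

lemma tail_eq_add (hω : RadialWeight ω) (hI : IntegrableOn (assocW ω) (Ico 0 1)) {K r : ℝ}
    (hK : 1 < K) (h0 : 0 ≤ r) (h1 : r < 1) :
    tailInt (assocW ω) r = (∫ s in r..(1 - (1 - r) / K), assocW ω s) +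
      tailInt (assocW ω) (1 - (1 - r) / K) := by
  have h := dilate_mem hK h1.le
  exact (intervalIntegral.integral_add_adjacent_intervals
    (intervalIntegrable_div hω.antitoneOn h0 h.1 (dilate_lt hK h1))
    (hω.intervalIntegrable_assocW hI (h0.trans h.1) h.2)).symm

lemma tail_sub_le (hω : RadialWeight ω) (hI : IntegrableOn (assocW ω) (Ico 0 1)) {K r : ℝ}
    (hK : 1 < K) (h0 : 0 ≤ r) (h1 : r < 1) :
    tailInt (assocW ω) r ≤ (K - 1) * tailInt ω r + tailInt (assocW ω) (1 - (1 - r) / K) := by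
  rw [tail_eq_add hω hI hK h0 h1]
  have h := dilate_mem hK h1.le
  have h2 := dilate_lt hK h1
  have hr : 0 < 1 - r := by linarith
  have hK0 : 0 < K := by linarith
  gcongr
  calc ∫ s in r..(1 - (1 - r) / K), assocW ω s
      ≤ ∫ s in r..(1 - (1 - r) / K), tailInt ω r / ((1 - r) / K) := by
        refine intervalIntegral.integral_mono_on h.1
          (intervalIntegrable_div hω.antitoneOn h0 h.1 h2) (by simp) fun u hu => ?_
        have h3 := hω.antitoneOn ⟨h0, h1.le⟩ ⟨h0.trans hu.1, hu.2.trans h.2⟩ hu.1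
        have h4 := hω.tail_nonneg h0 h1.le
        unfold assocW
        gcongr
        linarith [hu.2]
    _ = (K - 1) * tailInt ω r := by
        rw [intervalIntegral.integral_const, smul_eq_mul]
        field_simp
        ring

lemma tail_assoc_nonneg (hω : RadialWeight ω) {r : ℝ} (h0 : 0 ≤ r) (h1 : r ≤ 1) :
    0 ≤ tailInt (assocW ω) r :=
  intervalIntegral.integral_nonneg h1 fun _ hu =>
    div_nonneg (hω.tail_nonneg (h0.trans hu.1) hu.2) (by linarith [hu.2])

lemma mul_le_tail_sub (hω : RadialWeight ω) (hI : IntegrableOn (assocW ω) (Ico 0 1)) {K r : ℝ}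
    (hK : 1 < K) (h0 : 0 ≤ r) (h1 : r < 1) :
    (1 - 1 / K) * tailInt ω (1 - (1 - r) / K) + tailInt (assocW ω) (1 - (1 - r) / K) ≤
      tailInt (assocW ω) r := by
  rw [tail_eq_add hω hI hK h0 h1]
  have h := dilate_mem hK h1.le
  have h2 := dilate_lt hK h1
  have hr : 0 < 1 - r := by linarith
  have hK0 : 0 < K := by linarith
  gcongr
  calc (1 - 1 / K) * tailInt ω (1 - (1 - r) / K)
      = ∫ s in r..(1 - (1 - r) / K), tailInt ω (1 - (1 - r) / K) / (1 - r) := by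
        rw [intervalIntegral.integral_const, smul_eq_mul]
        field_simp
        ring
    _ ≤ ∫ s in r..(1 - (1 - r) / K), assocW ω s := by
        refine intervalIntegral.integral_mono_on h.1 (by simp)
          (intervalIntegrable_div hω.antitoneOn h0 h.1 h2) fun u hu => ?_
        have h3 := hω.antitoneOn ⟨h0.trans hu.1, hu.2.trans h.2⟩ ⟨h0.trans h.1, h.2⟩ hu.2
        have h4 := hω.tail_nonneg (h0.trans h.1) h.2
        have h5 : 0 < 1 - u := by linarith [hu.2]
        unfold assocW
        exact div_le_div₀ (h4.trans h3) h3 h5 (by linarith [hu.1])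

/-- The case `K = 2` of `mul_le_tail_sub`, with the term `T(ρ) ≥ 0` dropped. -/
lemma half_le_tail (hω : RadialWeight ω) (hI : IntegrableOn (assocW ω) (Ico 0 1)) {r : ℝ}
    (h0 : 0 ≤ r) (h1 : r < 1) :
    tailInt ω (1 - (1 - r) / 2) ≤ 2 * tailInt (assocW ω) r := by
  have h := mul_le_tail_sub hω hI one_lt_two h0 h1
  have h2 := dilate_mem one_lt_two h1.le
  have h3 := tail_assoc_nonneg hω (h0.trans h2.1) h2.2
  linarith

lemma tail_assoc_le (hω : RadialWeight ω) (hI : IntegrableOn (assocW ω) (Ico 0 1))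
    (hD : Dcheck (assocW ω)) :
    ∃ M : ℝ, 0 < M ∧ ∀ r ∈ Ico (0 : ℝ) 1, tailInt (assocW ω) r ≤ M * tailInt ω r := by
  obtain ⟨K, C, hK, hC, h⟩ := hD
  have hC0 : 0 < C - 1 := by linarith
  have hK0 : 0 < K - 1 := by linarith
  refine ⟨C * (K - 1) / (C - 1), by positivity, fun r hr => ?_⟩
  have h1 := mul_le_mul_of_nonneg_left (tail_sub_le hω hI hK hr.1 hr.2) (by linarith : 0 ≤ C)
  have h2 := h r hr
  rw [div_mul_eq_mul_div, le_div_iff₀ hC0]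
  linarith

lemma Dcheck.iterate (hD : Dcheck ω) :
    ∃ K C : ℝ, 1 < K ∧ 1 < C ∧ ∀ n : ℕ, ∀ r ∈ Ico (0 : ℝ) 1,
      C ^ n * tailInt ω (1 - (1 - r) / K ^ n) ≤ tailInt ω r := by
  obtain ⟨K, C, hK, hC, h⟩ := hD
  refine ⟨K, C, hK, hC, fun n => ?_⟩
  induction n with
  | zero => intro r _; simp
  | succ n ih =>
    intro r hr
    have h1 := dilate_mem hK hr.2.le
    have h2 := ih _ ⟨hr.1.trans h1.1, dilate_lt hK hr.2⟩
    have h3 := mul_le_mul_of_nonneg_left h2 (by linarith : 0 ≤ C)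
    rw [sub_sub_cancel, div_div, ← pow_succ'] at h3
    rw [pow_succ', mul_assoc]
    exact h3.trans (h r hr)

/-! ### Transfer of the doubling conditions -/

lemma dcheck_of_assocW (hω : RadialWeight ω) (hI : IntegrableOn (assocW ω) (Ico 0 1))
    (hD : Dcheck (assocW ω)) : Dcheck ω := by
  obtain ⟨M, hM, hTW⟩ := tail_assoc_le hω hI hD
  obtain ⟨K, C, hK, hC, h⟩ := Dcheck.iterate hD
  obtain ⟨n, hn⟩ := pow_unbounded_of_one_lt (4 * M) hC
  -- `n + 1` rather than `n`, so that the exponent is nonzero and `1 < K ^ (n + 1)`.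
  have hn1 : 4 * M < C ^ (n + 1) := hn.trans (pow_lt_pow_right₀ hC n.lt_succ_self)
  have hKn : 1 < K ^ (n + 1) := one_lt_pow₀ hK n.succ_ne_zero
  refine ⟨K ^ (n + 1) * 2, 2, by linarith, one_lt_two, fun r hr => ?_⟩
  have h1 := dilate_mem hKn hr.2.le
  have h1' := dilate_lt hKn hr.2
  have h2 := half_le_tail hω hI (hr.1.trans h1.1) h1'
  rw [sub_sub_cancel, div_div] at h2
  have h3 := h (n + 1) r hr
  have h4 := hTW r hr
  have h5 := tail_assoc_nonneg hω (hr.1.trans h1.1) h1.2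
  have h6 := mul_le_mul_of_nonneg_right hn1.le h5
  have h7 : M * (4 * tailInt (assocW ω) (1 - (1 - r) / K ^ (n + 1))) ≤ M * tailInt ω r := by
    linarith
  have h8 := le_of_mul_le_mul_left h7 hM
  linarith

lemma dhat_of_assocW (hω : RadialWeight ω) (hI : IntegrableOn (assocW ω) (Ico 0 1))
    (hU : Dhat (assocW ω)) (hD : Dcheck (assocW ω)) : Dhat ω := by
  obtain ⟨M, hM, hTW⟩ := tail_assoc_le hω hI hD
  obtain ⟨C, hC, h⟩ := hU
  have hpos : 0 < tailInt ω (3 / 4) := hω.2.2 _ (by norm_num)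
  have hpos0 : 0 < tailInt ω 0 := hω.2.2 _ (by norm_num)
  have hC0 : 0 < C := by linarith
  -- The quotient handles `r < 1/2`, the term `2 C² M` handles `r ≥ 1/2`, and the summand `1`
  -- makes the constant at least `1`.
  refine ⟨1 + tailInt ω 0 / tailInt ω (3 / 4) + 2 * C ^ 2 * M, ?_, fun r hr => ?_⟩
  · have : 0 ≤ tailInt ω 0 / tailInt ω (3 / 4) + 2 * C ^ 2 * M := by positivity
    linarith
  have hr' : (1 + r) / 2 ∈ Ico (0 : ℝ) 1 := ⟨by linarith [hr.1], by linarith [hr.2]⟩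
  have hp := hω.2.2 _ hr'
  have t1 : 0 ≤ 2 * C ^ 2 * M * tailInt ω ((1 + r) / 2) := by positivity
  have t2 : 0 ≤ tailInt ω 0 / tailInt ω (3 / 4) * tailInt ω ((1 + r) / 2) := by positivity
  rw [add_mul, add_mul, one_mul]
  rcases lt_or_ge r (1 / 2) with hlt | hge
  · have h1 := hω.antitoneOn (by simp) ⟨hr.1, hr.2.le⟩ hr.1
    have h2 := hω.antitoneOn ⟨hr'.1, hr'.2.le⟩ (by norm_num : (3 / 4 : ℝ) ∈ Icc (0 : ℝ) 1)
      (by linarith)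
    have h3 : tailInt ω 0 ≤ tailInt ω 0 / tailInt ω (3 / 4) * tailInt ω ((1 + r) / 2) := by
      rw [div_mul_eq_mul_div, le_div_iff₀ hpos]
      gcongr
    linarith
  · -- Here `2r - 1 ≥ 0` is the point whose dilation by `2` is `r`.
    have h1 := half_le_tail hω hI (r := 2 * r - 1) (by linarith) (by linarith [hr.2])
    have h2 := h (2 * r - 1) ⟨by linarith, by linarith [hr.2]⟩
    rw [show 1 - (1 - (2 * r - 1)) / 2 = r by ring] at h1
    rw [show (1 + (2 * r - 1)) / 2 = r by ring] at h2
    have h3 := h r hr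
    have h4 := hTW _ hr'
    have h5 : tailInt ω r ≤ 2 * C ^ 2 * M * tailInt ω ((1 + r) / 2) := by
      calc tailInt ω r ≤ 2 * tailInt (assocW ω) (2 * r - 1) := h1
        _ ≤ 2 * (C * (C * (M * tailInt ω ((1 + r) / 2)))) := by
          gcongr
          refine h2.trans ?_
          gcongr
          refine h3.trans ?_
          gcongr
        _ = _ := by ring
    linarith

lemma dcheck_assocW (hω : RadialWeight ω) (hI : IntegrableOn (assocW ω) (Ico 0 1))
    (hD : Dcheck ω) : Dcheck (assocW ω) := by
  obtain ⟨K, C, hK, hC, h⟩ := hD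
  refine ⟨K, C, hK, hC, fun r hr => ?_⟩
  rw [tail_dilate hK, ← intervalIntegral.integral_const_mul]
  refine intervalIntegral.integral_mono_on_of_le_Ioo hr.2.le
    ((hω.intervalIntegrable_dilate hI hK hr.1 hr.2.le).const_mul _)
    (hω.intervalIntegrable_assocW hI hr.1 hr.2.le) fun u hu => ?_
  have h1 := h u ⟨hr.1.trans hu.1.le, hu.2⟩
  have h2 : 0 < 1 - u := by linarith [hu.2]
  rw [← mul_div_assoc, assocW]
  gcongr

lemma dhat_assocW (hω : RadialWeight ω) (hI : IntegrableOn (assocW ω) (Ico 0 1))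
    (hD : Dhat ω) : Dhat (assocW ω) := by
  obtain ⟨C, hC, h⟩ := hD
  refine ⟨C, hC, fun r hr => ?_⟩
  have e : ∀ x : ℝ, (1 + x) / 2 = 1 - (1 - x) / 2 := fun x => by ring
  rw [e, tail_dilate one_lt_two, ← intervalIntegral.integral_const_mul]
  refine intervalIntegral.integral_mono_on_of_le_Ioo hr.2.le
    (hω.intervalIntegrable_assocW hI hr.1 hr.2.le)
    ((hω.intervalIntegrable_dilate hI one_lt_two hr.1 hr.2.le).const_mul _) fun u hu => ?_
  have h1 := h u ⟨hr.1.trans hu.1.le, hu.2⟩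
  have h2 : 0 < 1 - u := by linarith [hu.2]
  rw [e] at h1
  rw [← mul_div_assoc, assocW]
  gcongr

end Helpers

/-- A radial weight `ω` belongs to `D = D̂ ∩ Ď` if and only if `ω̃` is a weight
and `ω̃ ∈ D = D̂ ∩ Ď`. -/
theorem statement7 (ω : ℝ → ℝ) (hω : RadialWeight ω) :
    (Dhat ω ∧ Dcheck ω) ↔
      (MeasureTheory.IntegrableOn (assocW ω) (Set.Ico 0 1) ∧
        Dhat (assocW ω) ∧ Dcheck (assocW ω)) := by
  constructor
  · rintro ⟨hU, hD⟩
    have hI := integrableOn_assocW hω hD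
    exact ⟨hI, dhat_assocW hω hI hU, dcheck_assocW hω hI hD⟩
  · rintro ⟨hI, hU, hD⟩
    exact ⟨dhat_of_assocW hω hI hU hD, dcheck_of_assocW hω hI hD⟩
end
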